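/- arXiv:2508.21744 — 8 statements merged into one kernel-verified Lean document; each statement's English description precedes it below -/
import Mathlib

section
/- Let n ≥ 3 and let s be a symmetric positive semidefinite bilinear form on ℝ^n whose eigenvalues all lie in [0,1), and suppose 1 ≤ dim ker s̃ ≤ n − 2 (where s̃ is the associated self-adjoint endomorphism), i.e. s has at least one zero eigenvalue and at least two positive eigenvalues. Let F(y) = ‖y‖ − √(s(y,y)). Then the fundamental tensor of F fails to be positive definite off the slit: there exist y ∈ ℝ^n with s(y,y) ≠ 0 and a vector v ∈ ℝ^n such that ½ D²(F²)(y)(v,v) < 0, where D²(F²)(y) denotes the second Fréchet derivative of F² at y. -/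
/-!
Write `Q y = s y y` and look at `F² = (‖·‖ - √Q)²` along a line `h ↦ y + h v` with `s y v = 0`.
There `‖y + h v‖² = a + 2 c h + d h²` and `Q (y + h v) = p + q h²`, and half of the second
derivative of `F²` at `h = 0` is

  `d + q - √a q / √p - √p (d a - c²) / a^{3/2}`.

The last term is nonpositive by Cauchy–Schwarz, so this is negative once `√a = ‖y‖` is large
compared with `d`, `q` and `p`. Adding a large multiple of a kernel vector `e₀` to `y` makes `‖y‖`
large without changing `p` or the condition `s y v = 0`. It remains to find `e₁` and an
`s`-orthogonal `v` with `s e₁ e₁ > 0` and `s v v > 0`; they exist because the kernel has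
codimension at least two (`exists_pair`).
-/

open scoped RealInnerProductSpace

/-- A second Fréchet derivative on the diagonal is the second derivative along a line. -/
lemma iteratedFDeriv_two_eq_of_line {E : Type*} [NormedAddCommGroup E] [NormedSpace ℝ E]
    {f : E → ℝ} {y v : E} {g : ℝ → ℝ} {c : ℝ} (hf : ContDiffAt ℝ 2 f y)
    (h1 : ∀ᶠ h : ℝ in nhds 0, HasDerivAt (fun h : ℝ => f (y + h • v)) (g h) h)
    (h2 : HasDerivAt g c 0) :
    iteratedFDeriv ℝ 2 f y ![v, v] = c := by
  rw [iteratedFDeriv_two_apply]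
  simp only [Matrix.cons_val_zero, Matrix.cons_val_one]
  have hline : ∀ h : ℝ, HasDerivAt (fun h : ℝ => y + h • v) v h := fun h => by
    simpa using ((hasDerivAt_id h).smul_const v).const_add y
  have hd : ∀ᶠ z in nhds y, DifferentiableAt ℝ f z := by
    have := hf.eventually (by simp)
    filter_upwards [this] with z hz
    exact hz.differentiableAt (by norm_num)
  have hcont : Filter.Tendsto (fun h : ℝ => y + h • v) (nhds 0) (nhds y) := by
    have := (hline 0).continuousAt.tendsto
    simpa using this
  have heq : g =ᶠ[nhds 0] fun h : ℝ => fderiv ℝ f (y + h • v) v := by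
    filter_upwards [h1, hcont.eventually hd] with h hh hz
    exact hh.unique (hz.hasFDerivAt.comp_hasDerivAt h (hline h))
  have hdd : DifferentiableAt ℝ (fderiv ℝ f) y :=
    (hf.fderiv_right (m := 1) (by norm_num)).differentiableAt (by norm_num)
  have h3 : HasDerivAt (fun h : ℝ => fderiv ℝ f (y + h • v)) (fderiv ℝ (fderiv ℝ f) y v) 0 :=
    HasFDerivAt.comp_hasDerivAt_of_eq (0 : ℝ) hdd.hasFDerivAt (hline 0) (by simp)
  have h4 : HasDerivAt (fun h : ℝ => fderiv ℝ f (y + h • v) v)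
      (fderiv ℝ (fderiv ℝ f) y v v) 0 :=
    (ContinuousLinearMap.apply ℝ ℝ v).hasFDerivAt.comp_hasDerivAt (0 : ℝ) h3
  exact (h4.congr_of_eventuallyEq heq).unique h2

/-- First derivative of `(√A - √B)²` along the line, where `A`, `B` are the quadratic
polynomials giving `‖·‖²` and `s` there. -/
lemma line_deriv_one {a c d p q : ℝ} {h : ℝ}
    (hA : 0 < a + 2 * c * h + d * h ^ 2) (hB : 0 < p + q * h ^ 2) :
    HasDerivAt (fun h : ℝ => (√(a + 2 * c * h + d * h ^ 2) - √(p + q * h ^ 2)) ^ 2)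
      (2 * (√(a + 2 * c * h + d * h ^ 2) - √(p + q * h ^ 2)) *
        ((c + d * h) / √(a + 2 * c * h + d * h ^ 2) - q * h / √(p + q * h ^ 2))) h := by
  have dA : HasDerivAt (fun h : ℝ => a + 2 * c * h + d * h ^ 2) (2 * (c + d * h)) h := by
    have := (((hasDerivAt_id h).const_mul (2 * c)).const_add a).add
      (((hasDerivAt_id h).pow 2).const_mul d)
    exact this.congr_deriv (by simp; ring)
  have dB : HasDerivAt (fun h : ℝ => p + q * h ^ 2) (2 * (q * h)) h := by
    have := (((hasDerivAt_id h).pow 2).const_mul q).const_add p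
    exact this.congr_deriv (by simp; ring)
  have := ((dA.sqrt hA.ne').sub (dB.sqrt hB.ne')).pow 2
  refine this.congr_deriv ?_
  have := (Real.sqrt_pos.2 hA).ne'
  have := (Real.sqrt_pos.2 hB).ne'
  simp only [Pi.sub_apply]
  field_simp
  norm_num

lemma line_deriv_two {a c d p q : ℝ} (ha : 0 < a) (hp : 0 < p) :
    HasDerivAt (fun h : ℝ => 2 * (√(a + 2 * c * h + d * h ^ 2) - √(p + q * h ^ 2)) *
        ((c + d * h) / √(a + 2 * c * h + d * h ^ 2) - q * h / √(p + q * h ^ 2)))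
      (2 * (d + q - √a * q / √p - √p * (d * √a ^ 2 - c ^ 2) / √a ^ 3)) 0 := by
  have dA : HasDerivAt (fun h : ℝ => a + 2 * c * h + d * h ^ 2) (2 * c) 0 := by
    have := (((hasDerivAt_id (0 : ℝ)).const_mul (2 * c)).const_add a).add
      (((hasDerivAt_id (0 : ℝ)).pow 2).const_mul d)
    exact this.congr_deriv (by simp)
  have dB : HasDerivAt (fun h : ℝ => p + q * h ^ 2) 0 0 := by
    have := (((hasDerivAt_id (0 : ℝ)).pow 2).const_mul q).const_add p
    exact this.congr_deriv (by simp)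
  have dN : HasDerivAt (fun h : ℝ => c + d * h) d 0 := by
    simpa using ((hasDerivAt_id (0 : ℝ)).const_mul d).const_add c
  have dM : HasDerivAt (fun h : ℝ => q * h) q 0 := by
    simpa using (hasDerivAt_id (0 : ℝ)).const_mul q
  have hA := (Real.sqrt_pos.2 ha).ne'
  have hB := (Real.sqrt_pos.2 hp).ne'
  have sA := dA.sqrt (by simpa using ha.ne')
  have sB := dB.sqrt (by simpa using hp.ne')
  have := ((sA.sub sB).const_mul 2).mul
    ((dN.div sA (by simpa using hA)).sub (dM.div sB (by simpa using hB)))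
  refine this.congr_deriv ?_
  simp
  field_simp
  ring

/-- If the kernel of a positive semidefinite form has codimension at least two, there are two
`s`-orthogonal vectors on which the form is positive. -/
lemma exists_pair {n : ℕ} (hn : 3 ≤ n)
    (s : EuclideanSpace ℝ (Fin n) →ₗ[ℝ] EuclideanSpace ℝ (Fin n) →ₗ[ℝ] ℝ)
    (hsymm : ∀ u v, s u v = s v u)
    (hpsd : ∀ y, 0 ≤ s y y)
    (stilde : EuclideanSpace ℝ (Fin n) →ₗ[ℝ] EuclideanSpace ℝ (Fin n))
    (hst : ∀ u v, s u v = ⟪stilde u, v⟫)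
    (hker2 : Module.finrank ℝ (LinearMap.ker stilde) ≤ n - 2) :
    ∃ e v, 0 < s e e ∧ 0 < s v v ∧ s e v = 0 := by
  -- a vector with `s u u = 0` lies in the kernel: test the form on `stilde u + t • u`
  have key : ∀ u, s u u = 0 → u ∈ LinearMap.ker stilde := by
    intro u hu
    rw [LinearMap.mem_ker]
    by_contra hne
    have hpos : 0 < s u (stilde u) := by
      rw [hst]; exact real_inner_self_pos.2 hne
    set w := stilde u
    have h := hpsd (w + (-(s w w + 1) / (2 * s u w)) • u)
    simp only [map_add, map_smul, LinearMap.add_apply, LinearMap.smul_apply, smul_eq_mul, hu,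
      hsymm w u] at h
    field_simp at h
    nlinarith
  have hfin : Module.finrank ℝ (EuclideanSpace ℝ (Fin n)) = n := by simp
  obtain ⟨e, he⟩ : ∃ e, 0 < s e e := by
    by_contra! H
    have : LinearMap.ker stilde = ⊤ :=
      eq_top_iff.2 fun u _ => key u (le_antisymm (H u) (hpsd u))
    rw [this, finrank_top, hfin] at hker2
    omega
  by_contra! H
  have htop : LinearMap.ker stilde ⊔ Submodule.span ℝ {e} = ⊤ := by
    refine eq_top_iff.2 fun w _ => ?_
    have h0 : s e (w - (s e w / s e e) • e) = 0 := by
      simp only [map_sub, map_smul, smul_eq_mul]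
      field_simp
      ring
    have hk := key (w - (s e w / s e e) • e)
      (le_antisymm (not_lt.1 fun hlt => H e _ he hlt h0) (hpsd _))
    rw [← sub_add_cancel w ((s e w / s e e) • e)]
    exact Submodule.add_mem_sup hk
      (Submodule.smul_mem _ _ (Submodule.mem_span_singleton_self e))
  have h1 := Submodule.finrank_add_le_finrank_add_finrank (LinearMap.ker stilde)
    (Submodule.span ℝ {e})
  have h2 := finrank_span_le_card (R := ℝ) ({e} : Set (EuclideanSpace ℝ (Fin n)))
  rw [htop, finrank_top, hfin] at h1
  simp at h2
  omega

/-- For `n ≥ 3` and a symmetric positive semidefinite bilinear form `s` on ℝⁿ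
with all eigenvalues in `[0,1)` and `1 ≤ dim ker s̃ ≤ n - 2`, the fundamental tensor of
`F(y) = ‖y‖ - √(s(y,y))` fails to be positive definite off the slit. -/
theorem stmt1 {n : ℕ} (hn : 3 ≤ n)
    (s : EuclideanSpace ℝ (Fin n) →ₗ[ℝ] EuclideanSpace ℝ (Fin n) →ₗ[ℝ] ℝ)
    (hsymm : ∀ u v, s u v = s v u)
    (hpsd : ∀ y, 0 ≤ s y y)
    (stilde : EuclideanSpace ℝ (Fin n) →ₗ[ℝ] EuclideanSpace ℝ (Fin n))
    (hst : ∀ u v, s u v = ⟪stilde u, v⟫)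
    (heig : ∀ μ : ℝ, Module.End.HasEigenvalue stilde μ → 0 ≤ μ ∧ μ < 1)
    (hker1 : 1 ≤ Module.finrank ℝ (LinearMap.ker stilde))
    (hker2 : Module.finrank ℝ (LinearMap.ker stilde) ≤ n - 2) :
    ∃ y : EuclideanSpace ℝ (Fin n), s y y ≠ 0 ∧
      ∃ v : EuclideanSpace ℝ (Fin n),
        (1/2 : ℝ) * iteratedFDeriv ℝ 2
          (fun z => (‖z‖ - Real.sqrt (s z z))^2) y ![v, v] < 0 := by
  obtain ⟨e, v, he, hv, hev⟩ := exists_pair hn s hsymm hpsd stilde hst hker2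
  obtain ⟨k, hk, hk0⟩ : ∃ k ∈ LinearMap.ker stilde, k ≠ 0 := by
    refine Submodule.exists_mem_ne_zero_of_ne_bot fun h => ?_
    rw [h, finrank_bot] at hker1
    omega
  have hk1 : ∀ w, s k w = 0 := fun w => by rw [hst, LinearMap.mem_ker.1 hk, inner_zero_left]
  have hkn : 0 < ‖k‖ := norm_pos_iff.2 hk0
  have hb : 0 < √(s e e) := Real.sqrt_pos.2 he
  -- `‖y‖` has to exceed `(‖v‖² + s v v) √(s e e) / s v v`
  set M := (‖v‖ ^ 2 + s v v) * √(s e e) / s v v with hM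
  have hMpos : 0 < M := by positivity
  set R := (M + 1 + ‖e‖) / ‖k‖ with hR
  set y := R • k + e with hy
  have hRpos : 0 < R := by positivity
  have hyM : M < ‖y‖ := by
    have h1 : ‖R • k‖ - ‖e‖ ≤ ‖y‖ := by
      simpa using norm_sub_norm_le (R • k) (-e)
    rw [norm_smul, Real.norm_of_nonneg hRpos.le, hR, div_mul_cancel₀ _ hkn.ne'] at h1
    linarith
  have hypos : 0 < ‖y‖ := hMpos.trans hyM
  have hyy : s y y = s e e := by
    simp [hy, hk1, hsymm e k]
  have hyv : s y v = 0 := by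
    simp [hy, hk1, hev]
  refine ⟨y, by rw [hyy]; exact he.ne', v, ?_⟩
  have hsmooth : ContDiff ℝ 2 (fun z => s z z) := by
    have h : (fun z => s z z) = fun z => ⟪LinearMap.toContinuousLinearMap stilde z, z⟫ := by
      funext z; simp [hst]
    rw [h]
    exact (ContinuousLinearMap.contDiff _).inner ℝ contDiff_id
  have hf : ContDiffAt ℝ 2 (fun z => (‖z‖ - Real.sqrt (s z z))^2) y :=
    ((contDiffAt_norm ℝ (norm_pos_iff.1 hypos)).sub
      (hsmooth.contDiffAt.sqrt (by rw [hyy]; exact he.ne'))).pow 2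
  have ha : 0 < ‖y‖ ^ 2 := by positivity
  have hline : (fun h : ℝ => (‖y + h • v‖ - √(s (y + h • v) (y + h • v))) ^ 2) =
      fun h : ℝ => (√(‖y‖ ^ 2 + 2 * ⟪y, v⟫ * h + ‖v‖ ^ 2 * h ^ 2)
        - √(s e e + s v v * h ^ 2)) ^ 2 := by
    funext h
    have h1 : ‖y + h • v‖ = √(‖y‖ ^ 2 + 2 * ⟪y, v⟫ * h + ‖v‖ ^ 2 * h ^ 2) := by
      rw [← Real.sqrt_sq (norm_nonneg (y + h • v)), norm_add_sq_real, inner_smul_right, norm_smul,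
        mul_pow, Real.norm_eq_abs, sq_abs]
      ring_nf
    have h2 : s (y + h • v) (y + h • v) = s e e + s v v * h ^ 2 := by
      simp only [map_add, map_smul, LinearMap.add_apply, LinearMap.smul_apply, smul_eq_mul, hyy,
        hyv, hsymm v y]
      ring
    rw [h1, h2]
  have hA : ∀ᶠ h : ℝ in nhds 0, 0 < ‖y‖ ^ 2 + 2 * ⟪y, v⟫ * h + ‖v‖ ^ 2 * h ^ 2 := by
    have hc : Continuous fun h : ℝ => ‖y‖ ^ 2 + 2 * ⟪y, v⟫ * h + ‖v‖ ^ 2 * h ^ 2 := by fun_prop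
    exact hc.continuousAt.eventually (lt_mem_nhds (by simpa using ha))
  rw [iteratedFDeriv_two_eq_of_line hf (by
    rw [hline]
    filter_upwards [hA] with h hh
    exact line_deriv_one hh (by positivity)) (line_deriv_two ha he), Real.sqrt_sq hypos.le]
  have hCS : ⟪y, v⟫ ^ 2 ≤ ‖v‖ ^ 2 * ‖y‖ ^ 2 := by
    have := sq_le_sq' (by linarith [neg_le_of_abs_le (abs_real_inner_le_norm y v)])
      (real_inner_le_norm y v)
    nlinarith
  have h1 : 0 ≤ √(s e e) * (‖v‖ ^ 2 * ‖y‖ ^ 2 - ⟪y, v⟫ ^ 2) / ‖y‖ ^ 3 :=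
    div_nonneg (mul_nonneg hb.le (by linarith)) (by positivity)
  have h2 : ‖v‖ ^ 2 + s v v < ‖y‖ * s v v / √(s e e) := by
    rw [lt_div_iff₀ hb]
    rwa [hM, div_lt_iff₀ hv] at hyM
  linarith
end

section
/- Let V be a finite-dimensional real inner product space, let a ∈ V be nonzero with ‖a‖ < 1, and set F^±(y) = ‖y‖ ± |⟨a,y⟩| (the a-space norms, equal to ‖y‖ ± ‖a‖‖y_∥‖ where y_∥ is the orthogonal projection of y onto ℝa). Then for every y with ⟨a,y⟩ ≠ 0, the fundamental tensor (u,v) ↦ ½ D²((F^±)²)(y)(u,v) is positive definite; that is, the a-spaces are almost Minkowski spaces. -/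
open scoped RealInnerProductSpace

/-!
Near a point `y` with `⟪a, y⟫ ≠ 0` the absolute value `|⟪a, z⟫|` is `⟪a, z⟫` or `-⟪a, z⟫`, so
both `F^±` agree near `y` with a Randers norm `z ↦ ‖z‖ + ⟪b, z⟫`, where `b = ±a` and `‖b‖ < 1`
(`randers_pos`). For such a norm, the fundamental tensor on the diagonal is a sum of squares
with nonnegative weights (`half_hessian_randers`, `randers_form_pos`):
`(⟪y, v⟫ / ‖y‖ + ⟪b, v⟫)² + (‖y‖ + ⟪b, y⟫) / ‖y‖ * ‖w‖²`,
where `w` is the component of `v` orthogonal to `y`. The weight is positive because `‖b‖ < 1`.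
If `w = 0`, then `v = c • y` with `c ≠ 0`, and the first square is `(c * (‖y‖ + ⟪b, y⟫))² > 0`.
-/

lemma hasFDerivAt_norm_inner {V : Type*} [NormedAddCommGroup V] [InnerProductSpace ℝ V]
    {z : V} (hz : z ≠ 0) :
    HasFDerivAt (fun x : V => ‖x‖) (‖z‖⁻¹ • innerSL ℝ z) z := by
  have hn : ‖z‖ ≠ 0 := norm_ne_zero_iff.mpr hz
  have h := (hasStrictFDerivAt_norm_sq z).hasFDerivAt.sqrt (pow_ne_zero 2 hn)
  simp only [Real.sqrt_sq (norm_nonneg _)] at h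
  convert h using 1
  ext v
  simp
  field_simp

lemma hasFDerivAt_randers_sq {V : Type*} [NormedAddCommGroup V] [InnerProductSpace ℝ V]
    (b : V) {z : V} (hz : z ≠ 0) :
    HasFDerivAt (fun x : V => (‖x‖ + ⟪b, x⟫) ^ 2)
      ((2 * (‖z‖ + ⟪b, z⟫)) • (‖z‖⁻¹ • innerSL ℝ z + innerSL ℝ b)) z := by
  refine (((hasFDerivAt_norm_inner hz).add (innerSL ℝ b).hasFDerivAt).pow 2).congr_fderiv ?_
  ext v
  simp
  ring

lemma half_hessian_randers {V : Type*} [NormedAddCommGroup V] [InnerProductSpace ℝ V]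
    (b : V) {y : V} (hy : y ≠ 0) (v : V) :
    (1/2 : ℝ) * iteratedFDeriv ℝ 2 (fun x : V => (‖x‖ + ⟪b, x⟫) ^ 2) y ![v, v] =
      (⟪y, v⟫ / ‖y‖ + ⟪b, v⟫) ^ 2 +
        (‖y‖ + ⟪b, y⟫) / ‖y‖ * (‖v‖ ^ 2 - ⟪y, v⟫ ^ 2 / ‖y‖ ^ 2) := by
  have hn : ‖y‖ ≠ 0 := norm_ne_zero_iff.mpr hy
  have hev : fderiv ℝ (fun x : V => (‖x‖ + ⟪b, x⟫) ^ 2) =ᶠ[nhds y]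
      fun z => (2 * (‖z‖ + ⟪b, z⟫)) • (‖z‖⁻¹ • innerSL ℝ z + innerSL ℝ b) := by
    filter_upwards [isOpen_ne.mem_nhds hy] with z hz
    exact (hasFDerivAt_randers_sq b hz).fderiv
  have hN := hasFDerivAt_norm_inner hy
  have hinv : HasFDerivAt (fun x : V => ‖x‖⁻¹) (-(‖y‖ ^ 2)⁻¹ • (‖y‖⁻¹ • innerSL ℝ y)) y :=
    (hasDerivAt_inv hn).comp_hasFDerivAt y hN
  have hD := ((hN.add (innerSL ℝ b).hasFDerivAt).const_mul 2).smul
    ((hinv.smul (innerSL ℝ).hasFDerivAt).add_const (innerSL ℝ b))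
  have hD' := (hD.congr_of_eventuallyEq hev).fderiv
  have hyv : innerSL ℝ y v = ⟪y, v⟫ := rfl
  have hvv : innerSL ℝ v v = ‖v‖ ^ 2 := real_inner_self_eq_norm_sq v
  rw [iteratedFDeriv_two_apply, hD']
  simp [hyv, hvv]
  field_simp
  ring

/-- The Hessian form of a squared Randers norm is positive, since
`‖v‖² - ⟪y, v⟫² / ‖y‖²` is the squared norm of the component of `v` orthogonal to `y`. -/
lemma randers_form_pos {V : Type*} [NormedAddCommGroup V] [InnerProductSpace ℝ V]
    {b : V} (hb : ‖b‖ < 1) {y : V} (hy : y ≠ 0) {v : V} (hv : v ≠ 0) :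
    0 < (⟪y, v⟫ / ‖y‖ + ⟪b, v⟫) ^ 2 +
        (‖y‖ + ⟪b, y⟫) / ‖y‖ * (‖v‖ ^ 2 - ⟪y, v⟫ ^ 2 / ‖y‖ ^ 2) := by
  have hn : 0 < ‖y‖ := norm_pos_iff.mpr hy
  have hF : 0 < ‖y‖ + ⟪b, y⟫ := by
    have h1 := neg_le_of_abs_le (abs_real_inner_le_norm b y)
    nlinarith
  obtain ⟨c, hc⟩ : ∃ c : ℝ, c = ⟪y, v⟫ / ‖y‖ ^ 2 := ⟨_, rfl⟩
  have hw : ‖v‖ ^ 2 - ⟪y, v⟫ ^ 2 / ‖y‖ ^ 2 = ‖v - c • y‖ ^ 2 := by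
    rw [norm_sub_sq_real, inner_smul_right, norm_smul, mul_pow, Real.norm_eq_abs, sq_abs,
      real_inner_comm y v, hc]
    field_simp
    ring
  rw [hw]
  by_cases h0 : v - c • y = 0
  · have hvc : v = c • y := sub_eq_zero.mp h0
    have hc0 : c ≠ 0 := by
      rintro rfl
      exact hv (by simpa using hvc)
    have he : ⟪y, v⟫ / ‖y‖ + ⟪b, v⟫ = c * (‖y‖ + ⟪b, y⟫) := by
      rw [hvc, inner_smul_right, inner_smul_right, real_inner_self_eq_norm_sq]
      field_simp
    rw [h0, he]
    have : c * (‖y‖ + ⟪b, y⟫) ≠ 0 := mul_ne_zero hc0 hF.ne'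
    positivity
  · have : 0 < ‖v - c • y‖ := norm_pos_iff.mpr h0
    positivity

lemma randers_pos {V : Type*} [NormedAddCommGroup V] [InnerProductSpace ℝ V]
    {b : V} (hb : ‖b‖ < 1) {y : V} (hy : y ≠ 0) {f : V → ℝ}
    (hf : f =ᶠ[nhds y] fun x => (‖x‖ + ⟪b, x⟫) ^ 2) {v : V} (hv : v ≠ 0) :
    0 < (1/2 : ℝ) * iteratedFDeriv ℝ 2 f y ![v, v] := by
  rw [(hf.iteratedFDeriv ℝ 2).eq_of_nhds, half_hessian_randers b hy v]
  exact randers_form_pos hb hy hv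

/-- For a nonzero `a` in a finite-dimensional real inner product space with
`‖a‖ < 1`, the fundamental tensors of the a-space norms `F^±(y) = ‖y‖ ± |⟪a,y⟫|` are
positive definite at every `y` with `⟪a,y⟫ ≠ 0`: the a-spaces are almost Minkowski spaces. -/
theorem stmt2 {V : Type*} [NormedAddCommGroup V] [InnerProductSpace ℝ V]
    [FiniteDimensional ℝ V]
    (a : V) (ha0 : a ≠ 0) (ha1 : ‖a‖ < 1)
    (y : V) (hy : ⟪a, y⟫ ≠ 0) :
    (∀ v : V, v ≠ 0 →
      0 < (1/2 : ℝ) * iteratedFDeriv ℝ 2 (fun z => (‖z‖ + |⟪a, z⟫|)^2) y ![v, v]) ∧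
    (∀ v : V, v ≠ 0 →
      0 < (1/2 : ℝ) * iteratedFDeriv ℝ 2 (fun z => (‖z‖ - |⟪a, z⟫|)^2) y ![v, v]) := by
  have hy0 : y ≠ 0 := by
    rintro rfl
    simp at hy
  have hna : ‖-a‖ < 1 := by rwa [norm_neg]
  have hcont : ContinuousAt (fun z : V => ⟪a, z⟫) y := by fun_prop
  rcases lt_or_gt_of_ne hy with h | h
  · have hev := hcont.eventually_lt continuousAt_const h
    refine ⟨fun v hv => randers_pos hna hy0 ?_ hv, fun v hv => randers_pos ha1 hy0 ?_ hv⟩ <;>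
    · filter_upwards [hev] with z hz
      simp [abs_of_neg hz]
  · have hev := continuousAt_const.eventually_lt hcont h
    refine ⟨fun v hv => randers_pos ha1 hy0 ?_ hv, fun v hv => randers_pos hna hy0 ?_ hv⟩ <;>
    · filter_upwards [hev] with z hz
      simp [abs_of_pos hz, sub_eq_add_neg]
end

section
/- Let V be a finite-dimensional real inner product space and let a ∈ V with ‖a‖ < 1. Then the indicatrix of the Randers norm F_a(y) = ‖y‖ + ⟨a,y⟩ is an ellipsoid with center c = −a/(1 − ‖a‖²): explicitly, {y : ‖y‖ + ⟨a,y⟩ = 1} = {c + z : ‖z‖² − ⟨a,z⟩² = 1/(1 − ‖a‖²)}, and the quadratic form z ↦ ‖z‖² − ⟨a,z⟩² is positive definite. -/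
open scoped RealInnerProductSpace

/-!
Write `t = ⟪a, y⟫` and `z = y + a / (1 - ‖a‖²)`. Expanding gives
`‖z‖² - ⟪a, z⟫² = 1 / (1 - ‖a‖²) + (‖y‖² - (1 - t)²)`, so the ellipsoid equation for `z` says exactly
`‖y‖² = (1 - t)²`. By Cauchy-Schwarz and `‖a‖ < 1`, the branch `‖y‖ = t - 1` is impossible, so this
is equivalent to `‖y‖ + t = 1`. Positive definiteness is again Cauchy-Schwarz:
`|⟪a, z⟫| ≤ ‖a‖ ‖z‖ < ‖z‖` for `z ≠ 0`.
-/

/-- Completing the square: the quadratic form at the point recentred at `-a / (1 - ‖a‖²)`. -/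
lemma quadForm_recentred {V : Type*} [NormedAddCommGroup V] [InnerProductSpace ℝ V]
    (a : V) (ha : ‖a‖ < 1) (y : V) :
    ‖y + (1 / (1 - ‖a‖^2)) • a‖^2 - ⟪a, y + (1 / (1 - ‖a‖^2)) • a⟫^2 =
      1 / (1 - ‖a‖^2) + (‖y‖^2 - (1 - ⟪a, y⟫)^2) := by
  have h : 1 - ‖a‖^2 ≠ 0 := by nlinarith [norm_nonneg a]
  rw [norm_add_sq_real, inner_add_right, inner_smul_right, inner_smul_right, norm_smul, mul_pow,
    real_inner_self_eq_norm_sq, real_inner_comm, Real.norm_eq_abs, sq_abs]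
  field_simp
  ring

/-- For `‖a‖ < 1`, squaring the equation `‖y‖ = 1 - ⟪a, y⟫` adds no solutions. -/
lemma norm_add_inner_eq_one_iff {V : Type*} [NormedAddCommGroup V] [InnerProductSpace ℝ V]
    (a : V) (ha : ‖a‖ < 1) (y : V) :
    ‖y‖ + ⟪a, y⟫ = 1 ↔ ‖y‖^2 = (1 - ⟪a, y⟫)^2 := by
  have hcs := real_inner_le_norm a y
  have hy := norm_nonneg y
  constructor
  · intro h
    rw [← h]
    ring
  · intro h
    rcases sq_eq_sq_iff_eq_or_eq_neg.mp h with h | h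
    · linarith
    · nlinarith

/-- The indicatrix of the Randers norm `F_a(y) = ‖y‖ + ⟪a,y⟫` (with
`‖a‖ < 1`) is an ellipsoid with center `c = -a/(1-‖a‖²)`: it equals
`{c + z : ‖z‖² - ⟪a,z⟫² = 1/(1-‖a‖²)}`, and the quadratic form
`z ↦ ‖z‖² - ⟪a,z⟫²` is positive definite. -/
theorem stmt5 {V : Type*} [NormedAddCommGroup V] [InnerProductSpace ℝ V]
    [FiniteDimensional ℝ V]
    (a : V) (ha : ‖a‖ < 1) :
    ({y : V | ‖y‖ + ⟪a, y⟫ = 1} =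
      (fun z => (-(1 / (1 - ‖a‖^2))) • a + z) ''
        {z : V | ‖z‖^2 - ⟪a, z⟫^2 = 1 / (1 - ‖a‖^2)}) ∧
    (∀ z : V, z ≠ 0 → 0 < ‖z‖^2 - ⟪a, z⟫^2) := by
  refine ⟨?_, fun z hz => ?_⟩
  · ext y
    simp only [Set.mem_image, Set.mem_ofPred_eq]
    rw [norm_add_inner_eq_one_iff a ha]
    have key := quadForm_recentred a ha y
    constructor
    · intro h
      exact ⟨y + (1 / (1 - ‖a‖^2)) • a, by linarith, by module⟩
    · rintro ⟨z, hz, rfl⟩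
      rw [show -(1 / (1 - ‖a‖^2)) • a + z + (1 / (1 - ‖a‖^2)) • a = z by module] at key
      linarith
  · have hz' : 0 < ‖z‖ := norm_pos_iff.mpr hz
    have h : |⟪a, z⟫| < ‖z‖ := (abs_real_inner_le_norm a z).trans_lt (by nlinarith)
    exact sub_pos.mpr (sq_lt_sq.mpr (by rwa [abs_norm]))
end

section
/- Let n ≥ 2, let 0 < β < 1, and set B = 1/(1 − β²). For y ∈ ℝ^n write ỹ = (y¹, …, y^{n−1}) ∈ ℝ^{n−1}, ρ(y) = √(‖ỹ‖² + (yⁿ)²), and σ(y) = β‖ỹ‖ (the b-space bipartite factor for b = (0,…,0,β)). Then the bipartite indicatrix union of the b-spaces is the (n−1)-dimensional spindle toroid: {y : ỹ ≠ 0 and ρ(y) + σ(y) = 1} ∪ {y : ỹ ≠ 0 and ρ(y) − σ(y) = 1} ∪ {(0,…,0,1), (0,…,0,−1)} = {y : (‖ỹ‖ + βB)²/B² + (yⁿ)²/B = 1} ∪ {y : (‖ỹ‖ − βB)²/B² + (yⁿ)²/B = 1}. -/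
/-!
Write `r = ‖ỹ‖ ≥ 0`, `z = yⁿ` and `c = 1 - β² = 1/B`. Multiplying out, each of the ellipse equations
`(r ± βB)²/B² + z²/B = 1` is `c` times the equation `r² + z² = (1 ∓ βr)²`
(`ellipse_iff`, with `s = ±β`). For `r ≥ 0` the number `1 ∓ βr` is automatically nonnegative on
this curve, since `r ≤ |1 ∓ βr|` and `β < 1`; so the equation is equivalent to
`√(r² + z²) = 1 ∓ βr` (`sqrt_add_mul_iff`). Finally, on the slit `r = 0` both ellipses reduce to
`z² = 1`, which gives exactly the two poles (`mem_poles_iff`).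
-/

open scoped RealInnerProductSpace

/-- The component of `y ∈ ℝⁿ` (n = m+2) orthogonal to the last coordinate axis:
`(ỹ, 0)` where `ỹ = (y¹, …, y^{n-1})`. -/
noncomputable def tld {m : ℕ} (y : EuclideanSpace ℝ (Fin (m + 2))) :
    EuclideanSpace ℝ (Fin (m + 2)) :=
  y - y (Fin.last (m + 1)) • EuclideanSpace.single (Fin.last (m + 1)) (1 : ℝ)

/-- The ellipse equation, cleared of denominators; `s = ±β` covers both halves of the spindle. -/
lemma ellipse_iff {β s r z : ℝ} (hβ0 : 0 < β) (hβ1 : β < 1) (hs : s ^ 2 = β ^ 2) :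
    (r + s * (1 / (1 - β ^ 2))) ^ 2 / (1 / (1 - β ^ 2)) ^ 2 + z ^ 2 / (1 / (1 - β ^ 2)) = 1 ↔
      r ^ 2 + z ^ 2 = (1 - s * r) ^ 2 := by
  have hc : 1 - β ^ 2 ≠ 0 := by nlinarith
  have key : (r + s * (1 / (1 - β ^ 2))) ^ 2 / (1 / (1 - β ^ 2)) ^ 2
      + z ^ 2 / (1 / (1 - β ^ 2)) - 1 = (1 - β ^ 2) * (r ^ 2 + z ^ 2 - (1 - s * r) ^ 2) := by
    have h1 : (r + s * (1 / (1 - β ^ 2))) ^ 2 / (1 / (1 - β ^ 2)) ^ 2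
        + z ^ 2 / (1 / (1 - β ^ 2)) = (r * (1 - β ^ 2) + s) ^ 2 + z ^ 2 * (1 - β ^ 2) := by
      field_simp
    rw [h1]
    linear_combination (1 + r ^ 2 * (1 - β ^ 2)) * hs
  rw [← sub_eq_zero, key, mul_eq_zero, or_iff_right hc, sub_eq_zero]

lemma sqrt_add_mul_iff {s r z : ℝ} (hr : 0 ≤ r) (hs : |s| < 1) :
    √(r ^ 2 + z ^ 2) + s * r = 1 ↔ r ^ 2 + z ^ 2 = (1 - s * r) ^ 2 := by
  rw [← eq_sub_iff_add_eq]
  constructor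
  · intro h
    rw [← h, Real.sq_sqrt (by positivity)]
  · intro h
    have hsr : s * r ≤ r := mul_le_of_le_one_left hr (abs_lt.mp hs).2.le
    have h0 : 0 ≤ 1 - s * r := by
      by_contra! hneg
      -- otherwise `(1 - s r)² = (s r - 1)² < r²`, as `0 < s r - 1 < r`
      nlinarith [sq_nonneg z]
    rw [h, Real.sqrt_sq h0]

lemma mem_poles_iff {m : ℕ} (y : EuclideanSpace ℝ (Fin (m + 2))) :
    y ∈ ({EuclideanSpace.single (Fin.last (m + 1)) (1 : ℝ),
        EuclideanSpace.single (Fin.last (m + 1)) (-1 : ℝ)} :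
          Set (EuclideanSpace ℝ (Fin (m + 2)))) ↔
      tld y = 0 ∧ y (Fin.last (m + 1)) ^ 2 = 1 := by
  have hneg : EuclideanSpace.single (Fin.last (m + 1)) (-1 : ℝ) =
      (-1 : ℝ) • EuclideanSpace.single (Fin.last (m + 1)) (1 : ℝ) := by
    ext i; simp [apply_ite]
  rw [Set.mem_insert_iff, Set.mem_singleton_iff]
  constructor
  · rintro (rfl | rfl)
    · simp [tld]
    · rw [hneg]; simp [tld]
  · rintro ⟨h, hz⟩
    rw [tld, sub_eq_zero] at h
    rcases eq_or_eq_neg_of_sq_eq_sq _ 1 (hz.trans (one_pow 2).symm) with hz | hz <;> rw [hz] at h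
    · left; simpa using h
    · right; rw [hneg]; exact h

/-- For `n = m + 2 ≥ 2`, `0 < β < 1`, `B = 1/(1-β²)`,
`ρ(y) = √(‖ỹ‖² + (yⁿ)²)`, `σ(y) = β‖ỹ‖`, the bipartite indicatrix union of the
b-spaces (for `b = (0,…,0,β)`) is the (n-1)-dimensional spindle toroid. -/
theorem stmt6 (m : ℕ) (β : ℝ) (hβ0 : 0 < β) (hβ1 : β < 1) :
    ({y : EuclideanSpace ℝ (Fin (m + 2)) | tld y ≠ 0 ∧
        Real.sqrt (‖tld y‖^2 + (y (Fin.last (m + 1)))^2) + β * ‖tld y‖ = 1} ∪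
      {y : EuclideanSpace ℝ (Fin (m + 2)) | tld y ≠ 0 ∧
        Real.sqrt (‖tld y‖^2 + (y (Fin.last (m + 1)))^2) - β * ‖tld y‖ = 1} ∪
      ({EuclideanSpace.single (Fin.last (m + 1)) (1 : ℝ),
        EuclideanSpace.single (Fin.last (m + 1)) (-1 : ℝ)} :
          Set (EuclideanSpace ℝ (Fin (m + 2))))) =
    ({y : EuclideanSpace ℝ (Fin (m + 2)) |
        (‖tld y‖ + β * (1 / (1 - β^2)))^2 / (1 / (1 - β^2))^2
          + (y (Fin.last (m + 1)))^2 / (1 / (1 - β^2)) = 1} ∪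
      {y : EuclideanSpace ℝ (Fin (m + 2)) |
        (‖tld y‖ - β * (1 / (1 - β^2)))^2 / (1 / (1 - β^2))^2
          + (y (Fin.last (m + 1)))^2 / (1 / (1 - β^2)) = 1}) := by
  ext y
  rw [Set.mem_union, mem_poles_iff, Set.mem_union, Set.mem_union]
  simp only [Set.mem_ofPred_eq]
  have hr : 0 ≤ ‖tld y‖ := norm_nonneg _
  have hE₁ := ellipse_iff (r := ‖tld y‖) (z := y (Fin.last (m + 1))) hβ0 hβ1 rfl
  have hE₂ := ellipse_iff (r := ‖tld y‖) (z := y (Fin.last (m + 1))) hβ0 hβ1 (neg_sq β)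
  have hS₁ := sqrt_add_mul_iff (s := β) (z := y (Fin.last (m + 1))) hr
    (by rwa [abs_of_pos hβ0])
  have hS₂ := sqrt_add_mul_iff (s := -β) (z := y (Fin.last (m + 1))) hr
    (by rwa [abs_neg, abs_of_pos hβ0])
  rw [neg_mul, ← sub_eq_add_neg] at hE₂ hS₂
  rw [hE₁, hE₂, hS₁, hS₂]
  by_cases h : tld y = 0
  · simp [h]
  · simp [h]
end

section
/- Let n ≥ 1 and let F : ℝ^n ∖ {0} → ℝ be smooth, strictly positive, and positively 1-homogeneous (F(λy) = λF(y) for all λ > 0 and y ≠ 0), and suppose the fundamental tensor (u,v) ↦ ½ D²(F²)(y)(u,v) is positive definite for every y ≠ 0 (so F is a Minkowski norm). If F² extends to a C² function on all of ℝ^n, then F is a Euclidean norm: there exists a positive definite symmetric bilinear form q on ℝ^n such that F(y) = √(q(y,y)) for all y ≠ 0. -/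
open scoped RealInnerProductSpace

/-!
For fixed `y ≠ 0`, homogeneity gives `G (t • y) = t² G y` for `t > 0`, so the directional derivative
`φ t = DG (t • y) y` equals `2 t G y` for `t > 0`, and for `t = 0` too by continuity. Since `G` is
`C²`, `φ` is differentiable at `0` with derivative `D²G(0)(y, y)`; comparing with the right
derivative of `2 t G y` gives `D²G(0)(y, y) = 2 G y`. Hence `G = F²` off the origin is the quadratic
form of `q = ½ D²G(0)`, which is symmetric because `G` is `C²` and positive definite because
`F > 0`.
-/

/-- A `C²` function that is positively 2-homogeneous along the ray through `y` is given there by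
half its second derivative at the origin. -/
lemma sndFDeriv_zero_eq_of_homogeneous {E : Type*} [NormedAddCommGroup E] [NormedSpace ℝ E]
    {G : E → ℝ} (hG : ContDiff ℝ 2 G) (y : E)
    (hom : ∀ t : ℝ, 0 < t → G (t • y) = t ^ 2 * G y) :
    fderiv ℝ (fderiv ℝ G) 0 y y = 2 * G y := by
  have hG1 : Differentiable ℝ G := hG.differentiable (by norm_num)
  have hD : ContDiff ℝ 1 (fderiv ℝ G) := hG.fderiv_right (by norm_num)
  have hline : ∀ t : ℝ, HasDerivAt (fun s : ℝ => s • y) y t := fun t => by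
    simpa using (hasDerivAt_id t).smul_const y
  have hφpos : ∀ t : ℝ, 0 < t → fderiv ℝ G (t • y) y = 2 * t * G y := by
    intro t ht
    have h1 : HasDerivAt (fun s : ℝ => G (s • y)) (fderiv ℝ G (t • y) y) t :=
      (hG1 (t • y)).hasFDerivAt.comp_hasDerivAt t (hline t)
    have h2 : HasDerivAt (fun s : ℝ => s ^ 2 * G y) (2 * t * G y) t := by
      simpa using (hasDerivAt_pow 2 t).mul_const (G y)
    have heq : (fun s : ℝ => G (s • y)) =ᶠ[nhds t] fun s => s ^ 2 * G y := by
      filter_upwards [lt_mem_nhds ht] with s hs using hom s hs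
    exact h1.unique (h2.congr_of_eventuallyEq heq)
  have hφcont : Continuous fun t : ℝ => fderiv ℝ G (t • y) y :=
    (hD.continuous.comp (continuous_id.smul continuous_const)).clm_apply continuous_const
  have hφ : Set.EqOn (fun t : ℝ => fderiv ℝ G (t • y) y) (fun t => 2 * t * G y) (Set.Ici 0) := by
    have h : Set.EqOn (fun t : ℝ => fderiv ℝ G (t • y) y) (fun t => 2 * t * G y) (Set.Ioi 0) :=
      fun t ht => hφpos t ht
    simpa [closure_Ioi] using h.closure hφcont (by fun_prop)
  have h1 : HasDerivAt (fun t : ℝ => fderiv ℝ G (t • y) y) (fderiv ℝ (fderiv ℝ G) 0 y y) 0 := by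
    have hD0 : HasFDerivAt (fderiv ℝ G) (fderiv ℝ (fderiv ℝ G) 0) ((0 : ℝ) • y) := by
      rw [zero_smul]
      exact (hD.differentiable (by norm_num) 0).hasFDerivAt
    have hc : HasDerivAt (fun t : ℝ => fderiv ℝ G (t • y)) (fderiv ℝ (fderiv ℝ G) 0 y) 0 :=
      hD0.comp_hasDerivAt (0 : ℝ) (hline 0)
    exact (ContinuousLinearMap.apply ℝ ℝ y).hasFDerivAt.comp_hasDerivAt (0 : ℝ) hc
  have h2 : HasDerivAt (fun t : ℝ => 2 * t * G y) (2 * G y) 0 := by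
    simpa using ((hasDerivAt_id (0 : ℝ)).const_mul 2).mul_const (G y)
  exact (uniqueDiffOn_Ici (0 : ℝ) 0 Set.self_mem_Ici).eq_deriv _ h1.hasDerivWithinAt
    (h2.hasDerivWithinAt.congr hφ (hφ Set.self_mem_Ici))

/-- A Minkowski norm `F` on ℝⁿ (smooth, positive, positively 1-homogeneous
off 0, with positive definite fundamental tensor) whose square extends to a C² function
on all of ℝⁿ is a Euclidean norm: `F = √(q(y,y))` for a positive definite symmetric
bilinear form `q`. -/
theorem stmt7 {n : ℕ} (hn : 1 ≤ n)
    (F : EuclideanSpace ℝ (Fin n) → ℝ)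
    (hsmooth : ContDiffOn ℝ (⊤ : ℕ∞) F {(0 : EuclideanSpace ℝ (Fin n))}ᶜ)
    (hpos : ∀ y : EuclideanSpace ℝ (Fin n), y ≠ 0 → 0 < F y)
    (hhom : ∀ c : ℝ, 0 < c → ∀ y : EuclideanSpace ℝ (Fin n), y ≠ 0 → F (c • y) = c * F y)
    (hpd : ∀ y : EuclideanSpace ℝ (Fin n), y ≠ 0 → ∀ v : EuclideanSpace ℝ (Fin n), v ≠ 0 →
      0 < (1/2 : ℝ) * iteratedFDeriv ℝ 2 (fun z => (F z)^2) y ![v, v])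
    (G : EuclideanSpace ℝ (Fin n) → ℝ)
    (hG : ContDiff ℝ 2 G)
    (hGF : ∀ y : EuclideanSpace ℝ (Fin n), y ≠ 0 → G y = (F y)^2) :
    ∃ q : EuclideanSpace ℝ (Fin n) →ₗ[ℝ] EuclideanSpace ℝ (Fin n) →ₗ[ℝ] ℝ,
      (∀ u v, q u v = q v u) ∧
      (∀ v, v ≠ 0 → 0 < q v v) ∧
      (∀ y : EuclideanSpace ℝ (Fin n), y ≠ 0 → F y = Real.sqrt (q y y)) := by
  have hB : ∀ y : EuclideanSpace ℝ (Fin n), y ≠ 0 →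
      (1 / 2 : ℝ) * fderiv ℝ (fderiv ℝ G) 0 y y = F y ^ 2 := by
    intro y hy
    have h := sndFDeriv_zero_eq_of_homogeneous hG y fun t ht => by
      rw [hGF _ (smul_ne_zero ht.ne' hy), hGF y hy, hhom t ht y hy, mul_pow]
    rw [h, hGF y hy]
    ring
  have hsymm : IsSymmSndFDerivAt ℝ G 0 :=
    hG.contDiffAt.isSymmSndFDerivAt (by simp)
  refine ⟨LinearMap.mk₂ ℝ (fun u v => (1 / 2 : ℝ) * fderiv ℝ (fderiv ℝ G) 0 u v)
    ?_ ?_ ?_ ?_, ?_, ?_, ?_⟩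
  · intro u u' v; simp [mul_add]
  · intro c u v; simp; ring
  · intro u v v'; simp [mul_add]
  · intro c u v; simp; ring
  · intro u v
    simp only [LinearMap.mk₂_apply]
    rw [hsymm.eq u v]
  · intro v hv
    rw [LinearMap.mk₂_apply, hB v hv]
    exact pow_pos (hpos v hv) 2
  · intro y hy
    rw [LinearMap.mk₂_apply, hB y hy, Real.sqrt_sq (hpos y hy).le]
end

section
/- Let F = ρ + Δ be a bipartite Finsler norm on ℝ^n. Then at every y ∈ ℝ^n ∖ S and for all indices j, k, l: 2(F − Δ) C_{jkl} + Σ_{(jkl)} ((Δ/F) p_j − Δ_j)(h_{kl} − (F²/Δ) Δ_{kl}) = 0, where Σ_{(jkl)} denotes the sum over the three cyclic permutations of (j,k,l). -/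
/-!
The only input about `ρ` and `Δ` is that each is a function `G` whose square is a quadratic form
`b z z`. Differentiating `G² = b z z` three times gives `G G_j = b z e_j`, then
`G G_{jk} + G_j G_k = b e_j e_k`, and finally `G G_{jkl} = -(G_{jk} G_l + G_{jl} G_k + G_{kl} G_j)`,
so all third derivatives are expressed through lower ones (`pd3_of_sq_eq_bilin`). The Leibniz
rule for `(F²)_{jkl}` (`pd3_sq`) then turns the claim into a rational identity, in which
`(Δ/F) p_j - Δ_j = (Δ ρ_j - ρ Δ_j)/F` and `h_{kl} - (F²/Δ) Δ_{kl} = F (ρ_{kl} - (ρ/Δ) Δ_{kl})`.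
Cancelling the factor `F` needs `F ≠ 0`, which is where the eigenvalue bound enters: it gives
`s(y,y) < ‖y‖²` (`inner_map_self_lt`).

Regularity is carried as `AnalyticAt`, a condition that is both open and stable under `pd`, so
that identities can be differentiated repeatedly.
-/

open scoped RealInnerProductSpace

/-- Partial derivative in the `j`-th standard coordinate direction. -/
noncomputable def pd {n : ℕ} (f : EuclideanSpace ℝ (Fin n) → ℝ) (j : Fin n) :
    EuclideanSpace ℝ (Fin n) → ℝ :=
  fun y => fderiv ℝ f y (EuclideanSpace.single j (1 : ℝ))

open Filter Topology

section PartialDerivatives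

variable {n : ℕ} {f g : EuclideanSpace ℝ (Fin n) → ℝ} {y : EuclideanSpace ℝ (Fin n)}

lemma pd_congr (h : f =ᶠ[𝓝 y] g) (j : Fin n) : pd f j =ᶠ[𝓝 y] pd g j := by
  filter_upwards [h.fderiv (𝕜 := ℝ)] with z hz
  simp only [pd, hz]

lemma pd_analytic (hf : AnalyticAt ℝ f y) (j : Fin n) : AnalyticAt ℝ (pd f j) y :=
  ((ContinuousLinearMap.apply ℝ ℝ (EuclideanSpace.single j (1 : ℝ))).analyticAt _).comp hf.fderiv

lemma pd_add (hf : AnalyticAt ℝ f y) (hg : AnalyticAt ℝ g y) (j : Fin n) :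
    pd (fun z => f z + g z) j y = pd f j y + pd g j y := by
  simp only [pd]
  rw [fderiv_fun_add hf.differentiableAt hg.differentiableAt]
  rfl

lemma pd_mul (hf : AnalyticAt ℝ f y) (hg : AnalyticAt ℝ g y) (j : Fin n) :
    pd (fun z => f z * g z) j y = pd f j y * g y + f y * pd g j y := by
  simp only [pd]
  rw [fderiv_fun_mul hf.differentiableAt hg.differentiableAt]
  simp only [add_apply, smul_apply, smul_eq_mul]
  ring

lemma pd_const (c : ℝ) (j : Fin n) : pd (fun _ => c) j y = 0 := by
  simp [pd]

lemma pd_add_eventually (hf : AnalyticAt ℝ f y) (hg : AnalyticAt ℝ g y) (j : Fin n) :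
    pd (fun z => f z + g z) j =ᶠ[𝓝 y] fun z => pd f j z + pd g j z := by
  filter_upwards [hf.eventually_analyticAt, hg.eventually_analyticAt] with z h1 h2
  exact pd_add h1 h2 j

lemma pd_mul_eventually (hf : AnalyticAt ℝ f y) (hg : AnalyticAt ℝ g y) (j : Fin n) :
    pd (fun z => f z * g z) j =ᶠ[𝓝 y] fun z => pd f j z * g z + f z * pd g j z := by
  filter_upwards [hf.eventually_analyticAt, hg.eventually_analyticAt] with z h1 h2
  exact pd_mul h1 h2 j

lemma pd2_add_eventually (hf : AnalyticAt ℝ f y) (hg : AnalyticAt ℝ g y) (j k : Fin n) :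
    pd (pd (fun z => f z + g z) j) k =ᶠ[𝓝 y] fun z => pd (pd f j) k z + pd (pd g j) k z :=
  (pd_congr (pd_add_eventually hf hg j) k).trans
    (pd_add_eventually (pd_analytic hf j) (pd_analytic hg j) k)

lemma pd3_add (hf : AnalyticAt ℝ f y) (hg : AnalyticAt ℝ g y) (j k l : Fin n) :
    pd (pd (pd (fun z => f z + g z) j) k) l y
      = pd (pd (pd f j) k) l y + pd (pd (pd g j) k) l y := by
  rw [(pd_congr (pd2_add_eventually hf hg j k) l).eq_of_nhds]
  exact pd_add (pd_analytic (pd_analytic hf j) k) (pd_analytic (pd_analytic hg j) k) l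

lemma pd2_mul_self (hf : AnalyticAt ℝ f y) (j k : Fin n) :
    pd (pd (fun z => f z * f z) j) k y = 2 * (pd f j y * pd f k y + f y * pd (pd f j) k y) := by
  have hj := pd_analytic hf j
  rw [(pd_congr (pd_mul_eventually hf hf j) k).eq_of_nhds,
    pd_add (hj.fun_mul hf) (hf.fun_mul hj), pd_mul hj hf, pd_mul hf hj]
  ring

/-- The Leibniz rule for the third derivatives of a square. -/
lemma pd3_sq (hf : AnalyticAt ℝ f y) (j k l : Fin n) :
    pd (pd (pd (fun z => f z ^ 2) j) k) l y
      = 2 * (pd (pd f j) k y * pd f l y + pd (pd f j) l y * pd f k y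
          + pd (pd f k) l y * pd f j y + f y * pd (pd (pd f j) k) l y) := by
  have hj := pd_analytic hf j
  have hk := pd_analytic hf k
  have hjk := pd_analytic hj k
  have e : pd (pd (fun z => f z ^ 2) j) k =ᶠ[𝓝 y]
      fun z => 2 * (pd f j z * pd f k z + f z * pd (pd f j) k z) := by
    filter_upwards [hf.eventually_analyticAt] with z hz
    simp only [pow_two]
    exact pd2_mul_self hz j k
  rw [(pd_congr e l).eq_of_nhds,
    pd_mul analyticAt_const ((hj.fun_mul hk).fun_add (hf.fun_mul hjk)), pd_const,
    pd_add (hj.fun_mul hk) (hf.fun_mul hjk), pd_mul hj hk, pd_mul hf hjk]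
  ring

end PartialDerivatives

section SquareRootsOfQuadraticForms

variable {n : ℕ} (b : EuclideanSpace ℝ (Fin n) →ₗ[ℝ] EuclideanSpace ℝ (Fin n) →ₗ[ℝ] ℝ)

lemma bilin_analytic (y : EuclideanSpace ℝ (Fin n)) : AnalyticAt ℝ (fun z => b z z) y := by
  have h : (fun z => b z z) = fun z => (b.toContinuousBilinearMap z) z := by
    ext z; simp
  rw [h]
  exact ContDiffAt.analyticAt
    (b.toContinuousBilinearMap.contDiff.clm_apply contDiff_id).contDiffAt

lemma pd_apply_left (v : EuclideanSpace ℝ (Fin n)) (j : Fin n) (y : EuclideanSpace ℝ (Fin n)) :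
    pd (fun z => b z v) j y = b (EuclideanSpace.single j 1) v := by
  have h : (fun z => b z v) = fun z => (LinearMap.toContinuousLinearMap (b.flip v)) z := by
    ext z; simp
  rw [h, pd, ContinuousLinearMap.fderiv]
  simp

lemma pd_bilin (hb : ∀ u v, b u v = b v u) (j : Fin n) (y : EuclideanSpace ℝ (Fin n)) :
    pd (fun z => b z z) j y = 2 * b y (EuclideanSpace.single j 1) := by
  have h : (fun z => b z z) = fun z => (b.toContinuousBilinearMap z) z := by
    ext z; simp
  rw [h, pd, fderiv_clm_apply b.toContinuousBilinearMap.differentiableAt differentiableAt_fun_id]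
  simp [hb _ y]
  ring

variable {b} {G : EuclideanSpace ℝ (Fin n) → ℝ} {y : EuclideanSpace ℝ (Fin n)}

lemma analyticAt_of_sqrt (hy : b y y ≠ 0) : AnalyticAt ℝ (fun z => Real.sqrt (b z z)) y := by
  exact ContDiffAt.analyticAt ((bilin_analytic b y).contDiffAt.sqrt hy)

/-- First derivative of the relation `G² = b z z`, with the common factor `2` cancelled. -/
lemma mul_pd_of_sq_eq_bilin (hb : ∀ u v, b u v = b v u) (hG : AnalyticAt ℝ G y)
    (hsq : ∀ z, G z * G z = b z z) (j : Fin n) :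
    G y * pd G j y = b y (EuclideanSpace.single j 1) := by
  have h := pd_mul hG hG j
  rw [funext hsq, pd_bilin b hb] at h
  linarith

/-- Second derivative of the relation `G² = b z z`. -/
lemma mul_pd2_of_sq_eq_bilin (hb : ∀ u v, b u v = b v u) (hG : AnalyticAt ℝ G y)
    (hsq : ∀ z, G z * G z = b z z) (j k : Fin n) :
    pd G j y * pd G k y + G y * pd (pd G j) k y
      = b (EuclideanSpace.single j 1) (EuclideanSpace.single k 1) := by
  have e : (fun z => G z * pd G j z) =ᶠ[𝓝 y] fun z => b z (EuclideanSpace.single j 1) := by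
    filter_upwards [hG.eventually_analyticAt] with z hz
    exact mul_pd_of_sq_eq_bilin hb hz hsq j
  have h := (pd_congr e k).eq_of_nhds
  rw [pd_mul hG (pd_analytic hG j), pd_apply_left, hb] at h
  linarith

lemma pd2_comm_of_sq_eq_bilin (hb : ∀ u v, b u v = b v u) (hG : AnalyticAt ℝ G y)
    (hsq : ∀ z, G z * G z = b z z) (h0 : G y ≠ 0) (j k : Fin n) :
    pd (pd G j) k y = pd (pd G k) j y := by
  have h1 := mul_pd2_of_sq_eq_bilin hb hG hsq j k
  have h2 := mul_pd2_of_sq_eq_bilin hb hG hsq k j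
  rw [hb] at h2
  exact mul_left_cancel₀ h0 (by linarith)

/-- Third derivative of the relation `G² = b z z`: the right-hand side of the second one is
constant, so `G_{jkl}` is determined by lower derivatives. -/
lemma pd3_of_sq_eq_bilin (hb : ∀ u v, b u v = b v u) (hG : AnalyticAt ℝ G y)
    (hsq : ∀ z, G z * G z = b z z) (h0 : G y ≠ 0) (j k l : Fin n) :
    pd (pd (pd G j) k) l y
      = -(pd (pd G j) k y * pd G l y + pd (pd G j) l y * pd G k y
          + pd (pd G k) l y * pd G j y) / G y := by
  have hj := pd_analytic hG j
  have hk := pd_analytic hG k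
  have hjk := pd_analytic hj k
  have e : (fun z => pd G j z * pd G k z + G z * pd (pd G j) k z) =ᶠ[𝓝 y]
      fun _ => b (EuclideanSpace.single j 1) (EuclideanSpace.single k 1) := by
    filter_upwards [hG.eventually_analyticAt] with z hz
    exact mul_pd2_of_sq_eq_bilin hb hz hsq j k
  have h := (pd_congr e l).eq_of_nhds
  rw [pd_const, pd_add (hj.fun_mul hk) (hG.fun_mul hjk), pd_mul hj hk, pd_mul hG hjk] at h
  rw [eq_div_iff h0]
  linarith

end SquareRootsOfQuadraticForms

/-- A symmetric operator with all eigenvalues below `1` has quadratic form below `‖y‖²`: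
expand in an orthonormal basis of eigenvectors. -/
lemma inner_map_self_lt {n : ℕ} {T : EuclideanSpace ℝ (Fin n) →ₗ[ℝ] EuclideanSpace ℝ (Fin n)}
    (hT : T.IsSymmetric) (heig : ∀ μ : ℝ, Module.End.HasEigenvalue T μ → μ < 1)
    {y : EuclideanSpace ℝ (Fin n)} (hy : y ≠ 0) : ⟪T y, y⟫ < ‖y‖ ^ 2 := by
  have hn : Module.finrank ℝ (EuclideanSpace ℝ (Fin n)) = n := finrank_euclideanSpace_fin
  set e := hT.eigenvectorBasis hn with he
  have h1 : ⟪T y, y⟫ = ∑ i, hT.eigenvalues hn i * ⟪e i, y⟫ ^ 2 := by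
    rw [← e.sum_inner_mul_inner]
    refine Finset.sum_congr rfl fun i _ => ?_
    rw [hT y (e i), he, hT.apply_eigenvectorBasis hn i, inner_smul_right, real_inner_comm]
    simp
    ring
  have h2 : ‖y‖ ^ 2 = ∑ i, ⟪e i, y⟫ ^ 2 := by
    rw [← real_inner_self_eq_norm_sq, ← e.sum_inner_mul_inner]
    refine Finset.sum_congr rfl fun i _ => ?_
    rw [real_inner_comm y (e i)]
    ring
  have hlt : ∀ i, hT.eigenvalues hn i < 1 := fun i => heig _ (hT.hasEigenvalue_eigenvalues hn i)
  have hpos : 0 < ∑ i, ⟪e i, y⟫ ^ 2 := h2 ▸ by positivity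
  obtain ⟨i, -, hi⟩ := Finset.exists_ne_zero_of_sum_ne_zero hpos.ne'
  rw [h1, h2]
  refine Finset.sum_lt_sum (fun i _ => ?_) ⟨i, Finset.mem_univ i, ?_⟩
  · nlinarith [hlt i, sq_nonneg ⟪e i, y⟫]
  · have : 0 < ⟪e i, y⟫ ^ 2 := lt_of_le_of_ne (sq_nonneg _) (Ne.symm hi)
    nlinarith [hlt i]

/-- A bipartite Finsler norm `F = ρ + Δ` on ℝⁿ satisfies, at every `y` off
the slit, `2(F - Δ) C_{jkl} + Σ_{(jkl)} ((Δ/F) p_j - Δ_j)(h_{kl} - (F²/Δ) Δ_{kl}) = 0`,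
where `C_{jkl} = ¼(F²)_{jkl}`, `p_j = F_j`, `h_{jk} = F F_{jk}`, and the sum is over the
cyclic permutations of `(j,k,l)`. -/
theorem stmt10 {n : ℕ}
    (s : EuclideanSpace ℝ (Fin n) →ₗ[ℝ] EuclideanSpace ℝ (Fin n) →ₗ[ℝ] ℝ)
    (hsymm : ∀ u v, s u v = s v u)
    (hpsd : ∀ y, 0 ≤ s y y)
    (stilde : EuclideanSpace ℝ (Fin n) →ₗ[ℝ] EuclideanSpace ℝ (Fin n))
    (hst : ∀ u v, s u v = ⟪stilde u, v⟫)
    (heig : ∀ μ : ℝ, Module.End.HasEigenvalue stilde μ → μ < 1)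
    (Δ : EuclideanSpace ℝ (Fin n) → ℝ)
    (hΔ : (∀ z, Δ z = Real.sqrt (s z z)) ∨ (∀ z, Δ z = -Real.sqrt (s z z)))
    (F : EuclideanSpace ℝ (Fin n) → ℝ)
    (hF : ∀ z, F z = ‖z‖ + Δ z)
    (y : EuclideanSpace ℝ (Fin n)) (hy : s y y ≠ 0)
    (j k l : Fin n) :
    2 * (F y - Δ y) * ((1/4 : ℝ) * pd (pd (pd (fun z => (F z)^2) j) k) l y)
      + (((Δ y / F y) * pd F j y - pd Δ j y) *
           (F y * pd (pd F k) l y - ((F y)^2 / Δ y) * pd (pd Δ k) l y)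
       + ((Δ y / F y) * pd F k y - pd Δ k y) *
           (F y * pd (pd F l) j y - ((F y)^2 / Δ y) * pd (pd Δ l) j y)
       + ((Δ y / F y) * pd F l y - pd Δ l y) *
           (F y * pd (pd F j) k y - ((F y)^2 / Δ y) * pd (pd Δ j) k y)) = 0 := by
  have hy0 : y ≠ 0 := by
    rintro rfl
    simp at hy
  have hinner : ∀ u v : EuclideanSpace ℝ (Fin n),
      innerₗ (EuclideanSpace ℝ (Fin n)) u v = innerₗ (EuclideanSpace ℝ (Fin n)) v u :=
    fun u v => by rw [innerₗ_apply_apply, innerₗ_apply_apply, real_inner_comm]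
  have hsqρ : ∀ z : EuclideanSpace ℝ (Fin n),
      ‖z‖ * ‖z‖ = innerₗ (EuclideanSpace ℝ (Fin n)) z z :=
    fun z => (real_inner_self_eq_norm_mul_norm z).symm
  have haρ : AnalyticAt ℝ (fun z : EuclideanSpace ℝ (Fin n) => ‖z‖) y := by
    have h := analyticAt_of_sqrt (b := innerₗ (EuclideanSpace ℝ (Fin n))) (y := y)
      (by simpa using hy0)
    refine h.congr (Eventually.of_forall fun z => ?_)
    simp
  have hsqΔ : ∀ z, Δ z * Δ z = s z z := by
    intro z
    rcases hΔ with h | h <;> rw [h z] <;> simp [Real.mul_self_sqrt (hpsd z)]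
  have haΔ : AnalyticAt ℝ Δ y := by
    rcases hΔ with h | h
    · rw [funext h]; exact analyticAt_of_sqrt hy
    · rw [funext h]; exact (analyticAt_of_sqrt hy).neg
  have hρ0 : ‖y‖ ≠ 0 := norm_ne_zero_iff.2 hy0
  have hΔ0 : Δ y ≠ 0 := fun h => hy (by rw [← hsqΔ, h, zero_mul])
  have hF0 : ‖y‖ + Δ y ≠ 0 := by
    intro h
    -- `F = 0` would force `s(y,y) = Δ² = ‖y‖²`, against the eigenvalue bound.
    have hT : stilde.IsSymmetric := fun u v => by
      rw [← hst, hsymm, hst, real_inner_comm]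
    have hlt := inner_map_self_lt hT heig hy0
    rw [← hst, ← hsqΔ] at hlt
    have : Δ y = -‖y‖ := by linarith
    rw [this] at hlt
    nlinarith
  obtain rfl : F = fun z => ‖z‖ + Δ z := funext hF
  have p2 := fun a c => (pd2_add_eventually haρ haΔ a c).eq_of_nhds
  have p1 := fun a => pd_add haρ haΔ a
  rw [pd3_sq (haρ.fun_add haΔ), pd3_add haρ haΔ, pd3_of_sq_eq_bilin hinner haρ hsqρ hρ0,
    pd3_of_sq_eq_bilin hsymm haΔ hsqΔ hΔ0]
  simp only [p1, p2]
  rw [pd2_comm_of_sq_eq_bilin hinner haρ hsqρ hρ0 l j,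
    pd2_comm_of_sq_eq_bilin hsymm haΔ hsqΔ hΔ0 l j]
  field_simp
  ring
end

section
/- Let F = ρ + Δ be a b-space Finsler norm on ℝ^n and let y ∈ ℝ^n ∖ ℝb be a point where F(y) ≠ 0 and Δ(y) + ‖b‖² ρ(y) ≠ 0. Define λ_j = (⟨b,y⟩/F) ρ_j − b_j and the matrix G^{jk} = (ρ/F) ( δ_{jk} + (⟨b,y⟩² ρ/(Δ²(Δ + ‖b‖² ρ))) λ_j λ_k − (‖b‖² ρ/(Δ + ‖b‖² ρ)) P_{jk} ). Then G is the inverse of the fundamental tensor at y: G^{jm} g_{mk} = δ_{jk} for all j, k (repeated index m summed). -/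
/-!
Write `ρ = ‖y‖`, `s = ‖b‖²`, `β = ⟪b, y⟫`. Pythagoras gives `Δ² = sρ² - β²`, and off the line `ℝb`
this is positive, so `Δ = ±√(s‖z‖² - ⟪b, z⟫²)` is smooth there with differential
`Δ⁻¹ (s ⟪y, ·⟫ - β ⟪b, ·⟫)`. Differentiating `F²/2` twice shows that the fundamental tensor has the
form `A δ + B y yᵀ + C (y bᵀ + b yᵀ) + E b bᵀ` with scalars `A, B, C, E` in `ρ, s, β, Δ`
(`hessian_formula`).

The matrix `G` has the same form, with scalars `A', B', C', E'`, because `λ` and `P` are built from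
`y` and `b`. A product of two such matrices is again a multiple of `δ` plus a combination of
`y yᵀ, y bᵀ, b yᵀ, b bᵀ` (`sum_mul_rank_two`), so the claim amounts to five scalar identities:
`A' A = 1` and the vanishing of the other four coefficients. They are rational identities in
`ρ, Δ, β` once `s` is eliminated through `s = (Δ² + β²)/ρ²` (`scalar_identity`).
-/

open scoped RealInnerProductSpace

/-- The orthogonal projection matrix `P_{jk} = δ_{jk} - b_j b_k/‖b‖²` onto `b^⊥`. -/
noncomputable def Pm {n : ℕ} (b : EuclideanSpace ℝ (Fin n)) (j k : Fin n) : ℝ :=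
  (if j = k then 1 else 0) - b j * b k / ‖b‖^2

lemma hasFDerivAt_norm_of_ne_zero {n : ℕ} {z : EuclideanSpace ℝ (Fin n)} (hz : z ≠ 0) :
    HasFDerivAt (fun z : EuclideanSpace ℝ (Fin n) => ‖z‖) (‖z‖⁻¹ • innerSL ℝ z) z := by
  have h := ((hasStrictFDerivAt_norm_sq z).hasFDerivAt).sqrt (by simpa using hz)
  simp only [Real.sqrt_sq (norm_nonneg _)] at h
  refine h.congr_fderiv ?_
  ext v
  simp
  field_simp

/-- The differential of `Δ = ε √(‖b‖²‖z‖² - ⟪b, z⟫²)`, the sign `ε` being encoded by `ε² = 1`. -/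
lemma hasFDerivAt_Delta {n : ℕ} (b : EuclideanSpace ℝ (Fin n)) (ε : ℝ)
    (Δ : EuclideanSpace ℝ (Fin n) → ℝ) (hε : ε ^ 2 = 1)
    (hΔ : ∀ z, Δ z = ε * √(‖b‖ ^ 2 * ‖z‖ ^ 2 - ⟪b, z⟫ ^ 2))
    (z : EuclideanSpace ℝ (Fin n)) (hz : 0 < ‖b‖ ^ 2 * ‖z‖ ^ 2 - ⟪b, z⟫ ^ 2) :
    HasFDerivAt Δ ((Δ z)⁻¹ • (‖b‖ ^ 2 • innerSL ℝ z - ⟪b, z⟫ • innerSL ℝ b)) z := by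
  have h1 := (hasStrictFDerivAt_norm_sq z).hasFDerivAt.const_mul (‖b‖ ^ 2)
  have h2 : HasFDerivAt (fun z => ⟪b, z⟫) (innerSL ℝ b) z := (innerSL ℝ b).hasFDerivAt
  have h := ((h1.sub (h2.pow 2)).sqrt hz.ne').const_mul ε
  have hfun : Δ = fun z => ε * √(‖b‖ ^ 2 * ‖z‖ ^ 2 - ⟪b, z⟫ ^ 2) := funext hΔ
  rw [hΔ z, hfun]
  refine h.congr_fderiv ?_
  have hs := Real.sqrt_pos.2 hz
  have he : ε ≠ 0 := by rintro rfl; norm_num at hε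
  ext v
  simp
  field_simp
  rw [hε]
  ring

/-- The `(j, k)` entry of a product of two matrices of the form `A δ + (terms in y and b)`. Only the
`j`-th row of the left factor and the `k`-th column of the right one enter; `p', q'` and `p, q` are
the coefficients of `y m` and `b m` in these. -/
lemma sum_mul_rank_two {n : ℕ} (y b : EuclideanSpace ℝ (Fin n)) (j k : Fin n)
    (A A' p q p' q' : ℝ) :
    ∑ m, (A' * (if j = m then 1 else 0) + p' * y m + q' * b m) *
        (A * (if m = k then 1 else 0) + p * y m + q * b m)
      = A' * A * (if j = k then 1 else 0) + A' * (p * y j + q * b j) + A * (p' * y k + q' * b k)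
        + p' * (p * ‖y‖ ^ 2 + q * ⟪b, y⟫) + q' * (p * ⟪b, y⟫ + q * ‖b‖ ^ 2) := by
  have h1 : ‖y‖ ^ 2 = ∑ m, y m * y m := by
    rw [EuclideanSpace.real_norm_sq_eq]; simp [pow_two]
  have h2 : ‖b‖ ^ 2 = ∑ m, b m * b m := by
    rw [EuclideanSpace.real_norm_sq_eq]; simp [pow_two]
  have h3 : ⟪b, y⟫ = ∑ m, y m * b m := by
    simp [PiLp.inner_apply]
  have e1 : ∑ m, (if j = m then 1 else 0) * (if m = k then (1 : ℝ) else 0)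
      = if j = k then 1 else 0 := by simp
  have e2 : ∀ v : Fin n → ℝ, ∑ m, (if j = m then 1 else 0) * v m = v j := by simp
  have e3 : ∀ v : Fin n → ℝ, ∑ m, (if m = k then 1 else 0) * v m = v k := by simp
  rw [h1, h2, h3, ← e1, ← e2 y, ← e2 b, ← e3 y, ← e3 b]
  simp only [Finset.mul_sum, ← Finset.sum_add_distrib]
  refine Finset.sum_congr rfl fun m _ => ?_
  ring

/-- The entry computed in `sum_mul_rank_two` equals `δ`, for the coefficients `A, B, C, E` of the
fundamental tensor and `A', B', C', E'` of its claimed inverse. Here `r, s, β, D` stand for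
`‖y‖, ‖b‖², ⟪b, y⟫, Δ y`. -/
lemma scalar_identity (s r D β yj yk bj bk δ : ℝ) (hs : s ≠ 0) (hr : r ≠ 0) (hD : D ≠ 0)
    (hF : r + D ≠ 0) (hE : D + s * r ≠ 0) (h : D ^ 2 = s * r ^ 2 - β ^ 2)
    (A B C E A' B' C' E' K L : ℝ)
    (hA : A = (r + D) * (1 / r + s / D))
    (hB : B = (1 / r + s / D) ^ 2 - (r + D) / r ^ 3 - (r + D) * s ^ 2 / D ^ 3)
    (hC : C = -(1 / r + s / D) * (β / D) + (r + D) * s * β / D ^ 3)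
    (hEE : E = (β / D) ^ 2 - (r + D) / D - (r + D) * β ^ 2 / D ^ 3)
    (hK : K = β ^ 2 * r / (D ^ 2 * (D + s * r)))
    (hL : L = s * r / (D + s * r))
    (hA' : A' = r / (r + D) * (1 - L))
    (hB' : B' = r / (r + D) * K * (β / ((r + D) * r)) ^ 2)
    (hC' : C' = -(r / (r + D) * K * (β / ((r + D) * r))))
    (hE' : E' = r / (r + D) * (K + L / s)) :
    A' * A * δ + A' * ((B * yk + C * bk) * yj + (C * yk + E * bk) * bj)
      + A * ((B' * yj + C' * bj) * yk + (C' * yj + E' * bj) * bk)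
      + (B' * yj + C' * bj) * ((B * yk + C * bk) * r ^ 2 + (C * yk + E * bk) * β)
      + (C' * yj + E' * bj) * ((B * yk + C * bk) * β + (C * yk + E * bk) * s) = δ := by
  have hsub : s = (D ^ 2 + β ^ 2) / r ^ 2 := by field_simp; linarith
  have hN : D ^ 2 + β ^ 2 ≠ 0 := by
    intro h0; rw [h0] at hsub; simp at hsub; exact hs hsub
  have hE2 : D * r + (D ^ 2 + β ^ 2) ≠ 0 := by
    intro h0; apply hE; rw [hsub]; field_simp; linarith
  have hEq : D + s * r = (D * r + (D ^ 2 + β ^ 2)) / r := by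
    rw [hsub]; field_simp
  -- Keeping this denominator as a single variable `W` lets `field_simp` clear it.
  obtain ⟨W, hW⟩ : ∃ W, W = D * r + (D ^ 2 + β ^ 2) := ⟨_, rfl⟩
  rw [← hW] at hE2 hEq
  rw [hEq] at hK hL
  subst hsub
  -- The coefficients of `δ`, `yj * yk`, `yj * bk`, `bj * yk` and `bj * bk`, in this order.
  have i1 : A' * A = 1 := by
    rw [hA', hA, hL]; field_simp; rw [hW]; ring
  have i2 : A' * B + A * B' + B' * (B * r ^ 2 + C * β)
      + C' * (B * β + C * ((D ^ 2 + β ^ 2) / r ^ 2)) = 0 := by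
    rw [hA', hA, hB', hC', hB, hC, hK, hL]; field_simp; rw [hW]; ring
  have i3 : A' * C + A * C' + B' * (C * r ^ 2 + E * β)
      + C' * (C * β + E * ((D ^ 2 + β ^ 2) / r ^ 2)) = 0 := by
    rw [hA', hA, hB', hC', hEE, hC, hK, hL]; field_simp; rw [hW]; ring
  have i4 : A' * C + A * C' + C' * (B * r ^ 2 + C * β)
      + E' * (B * β + C * ((D ^ 2 + β ^ 2) / r ^ 2)) = 0 := by
    rw [hA', hA, hB, hC', hE', hC, hK, hL]; field_simp; rw [hW]; ring
  have i5 : A' * E + A * E' + C' * (C * r ^ 2 + E * β)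
      + E' * (C * β + E * ((D ^ 2 + β ^ 2) / r ^ 2)) = 0 := by
    rw [hA', hA, hEE, hC', hE', hC, hK, hL]; field_simp; rw [hW]; ring
  linear_combination δ * i1 + yj * yk * i2 + yj * bk * i3 + bj * yk * i4 + bj * bk * i5

/-- The fundamental tensor at `y`, written as `A δ + B y yᵀ + C (y bᵀ + b yᵀ) + E b bᵀ` with the
coefficients of `scalar_identity`. -/
lemma hessian_formula {n : ℕ} (b : EuclideanSpace ℝ (Fin n)) (ε : ℝ)
    (Δ F : EuclideanSpace ℝ (Fin n) → ℝ) (hε : ε ^ 2 = 1)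
    (hΔ : ∀ z, Δ z = ε * √(‖b‖ ^ 2 * ‖z‖ ^ 2 - ⟪b, z⟫ ^ 2))
    (hF : ∀ z, F z = ‖z‖ + Δ z)
    (y : EuclideanSpace ℝ (Fin n)) (hy : 0 < ‖b‖ ^ 2 * ‖y‖ ^ 2 - ⟪b, y⟫ ^ 2) (m k : Fin n) :
    (1 / 2 : ℝ) * pd (pd (fun z => (F z) ^ 2) m) k y =
      (‖y‖ + Δ y) * (1 / ‖y‖ + ‖b‖ ^ 2 / Δ y) * (if m = k then 1 else 0)
      + ((((1 / ‖y‖ + ‖b‖ ^ 2 / Δ y) ^ 2 - (‖y‖ + Δ y) / ‖y‖ ^ 3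
            - (‖y‖ + Δ y) * (‖b‖ ^ 2) ^ 2 / Δ y ^ 3)) * y k
        + (-(1 / ‖y‖ + ‖b‖ ^ 2 / Δ y) * (⟪b, y⟫ / Δ y)
            + (‖y‖ + Δ y) * ‖b‖ ^ 2 * ⟪b, y⟫ / Δ y ^ 3) * b k) * y m
      + ((-(1 / ‖y‖ + ‖b‖ ^ 2 / Δ y) * (⟪b, y⟫ / Δ y)
            + (‖y‖ + Δ y) * ‖b‖ ^ 2 * ⟪b, y⟫ / Δ y ^ 3) * y k
        + ((⟪b, y⟫ / Δ y) ^ 2 - (‖y‖ + Δ y) / Δ y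
            - (‖y‖ + Δ y) * ⟪b, y⟫ ^ 2 / Δ y ^ 3) * b k) * b m := by
  have hne : ∀ z : EuclideanSpace ℝ (Fin n),
      0 < ‖b‖ ^ 2 * ‖z‖ ^ 2 - ⟪b, z⟫ ^ 2 → z ≠ 0 := by
    rintro z hz rfl; simp at hz
  have hDne : ∀ z : EuclideanSpace ℝ (Fin n),
      0 < ‖b‖ ^ 2 * ‖z‖ ^ 2 - ⟪b, z⟫ ^ 2 → Δ z ≠ 0 := by
    intro z hz
    rw [hΔ]
    refine mul_ne_zero ?_ (Real.sqrt_pos.2 hz).ne'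
    rintro rfl; norm_num at hε
  obtain rfl : F = fun z => ‖z‖ + Δ z := funext hF
  have hFd : ∀ z : EuclideanSpace ℝ (Fin n), 0 < ‖b‖ ^ 2 * ‖z‖ ^ 2 - ⟪b, z⟫ ^ 2 →
      HasFDerivAt (fun z => ‖z‖ + Δ z) (‖z‖⁻¹ • innerSL ℝ z
        + (Δ z)⁻¹ • (‖b‖ ^ 2 • innerSL ℝ z - ⟪b, z⟫ • innerSL ℝ b)) z := fun z hz =>
    (hasFDerivAt_norm_of_ne_zero (hne z hz)).add (hasFDerivAt_Delta b ε Δ hε hΔ z hz)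
  have hgrad : ∀ z : EuclideanSpace ℝ (Fin n), 0 < ‖b‖ ^ 2 * ‖z‖ ^ 2 - ⟪b, z⟫ ^ 2 →
      pd (fun z => (‖z‖ + Δ z) ^ 2) m z = 2 * ((‖z‖ + Δ z) *
        (‖z‖⁻¹ * z m + (Δ z)⁻¹ * (‖b‖ ^ 2 * z m - ⟪b, z⟫ * b m))) := by
    intro z hz
    rw [pd, ((hFd z hz).pow 2).fderiv]
    simp [EuclideanSpace.inner_single_right]
    ring
  have hev : ∀ᶠ z in nhds y, 0 < ‖b‖ ^ 2 * ‖z‖ ^ 2 - ⟪b, z⟫ ^ 2 := by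
    have hc : Continuous fun z : EuclideanSpace ℝ (Fin n) =>
        ‖b‖ ^ 2 * ‖z‖ ^ 2 - ⟪b, z⟫ ^ 2 := by fun_prop
    exact hc.continuousAt.eventually (lt_mem_nhds hy)
  have hn0 : ‖y‖ ≠ 0 := norm_ne_zero_iff.2 (hne y hy)
  have hD0 := hDne y hy
  have hm : HasFDerivAt (fun z : EuclideanSpace ℝ (Fin n) => z m)
      (EuclideanSpace.proj m : EuclideanSpace ℝ (Fin n) →L[ℝ] ℝ) y :=
    (EuclideanSpace.proj m : EuclideanSpace ℝ (Fin n) →L[ℝ] ℝ).hasFDerivAt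
  have hb : HasFDerivAt (fun z => ⟪b, z⟫) (innerSL ℝ b) y := (innerSL ℝ b).hasFDerivAt
  have hni := (hasDerivAt_inv hn0).comp_hasFDerivAt y (hasFDerivAt_norm_of_ne_zero (hne y hy))
  have hDi := (hasDerivAt_inv hD0).comp_hasFDerivAt y (hasFDerivAt_Delta b ε Δ hε hΔ y hy)
  have hmain := ((hFd y hy).mul ((hni.mul hm).add
    (hDi.mul ((hm.const_mul (‖b‖ ^ 2)).sub (hb.mul_const (b m)))))).const_mul 2
  -- The gradient formula holds near `y`, not only at `y`, so it may be differentiated once more.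
  have heq : pd (fun z => (‖z‖ + Δ z) ^ 2) m =ᶠ[nhds y] _ := hev.mono hgrad
  rw [pd, heq.fderiv_eq]
  have h2 := hmain.fderiv
  simp only [Function.comp_def, Pi.mul_def, Pi.add_def, Pi.sub_def] at h2
  rw [h2]
  by_cases hmk : m = k <;>
  · simp [EuclideanSpace.inner_single_right, hmk]
    field_simp
    ring

/-- explicit inverse of the fundamental tensor of a b-space Finsler norm
`F = ρ + Δ` at `y ∉ ℝb` with `F(y) ≠ 0` and `Δ(y) + ‖b‖²ρ(y) ≠ 0`: with
`λ_j = (⟪b,y⟫/F) ρ_j - b_j` and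
`G^{jk} = (ρ/F)(δ_{jk} + (⟪b,y⟫²ρ/(Δ²(Δ + ‖b‖²ρ))) λ_j λ_k - (‖b‖²ρ/(Δ + ‖b‖²ρ)) P_{jk})`,
one has `G^{jm} g_{mk} = δ_{jk}`. -/
theorem stmt15 {n : ℕ} (hn : 2 ≤ n)
    (b : EuclideanSpace ℝ (Fin n)) (hb0 : 0 < ‖b‖) (hb1 : ‖b‖ < 1)
    (Δ : EuclideanSpace ℝ (Fin n) → ℝ)
    (hΔ : (∀ z, Δ z = ‖b‖ * ‖z - (⟪b, z⟫ / ‖b‖^2) • b‖) ∨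
          (∀ z, Δ z = -(‖b‖ * ‖z - (⟪b, z⟫ / ‖b‖^2) • b‖)))
    (F : EuclideanSpace ℝ (Fin n) → ℝ)
    (hF : ∀ z, F z = ‖z‖ + Δ z)
    (y : EuclideanSpace ℝ (Fin n))
    (hy : y ∉ Submodule.span ℝ ({b} : Set (EuclideanSpace ℝ (Fin n))))
    (hF0 : F y ≠ 0) (hD0 : Δ y + ‖b‖^2 * ‖y‖ ≠ 0)
    (lam : Fin n → ℝ)
    (hlam : ∀ j, lam j = (⟪b, y⟫ / F y) * pd (fun z => ‖z‖) j y - b j)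
    (G : Fin n → Fin n → ℝ)
    (hG : ∀ j k, G j k = (‖y‖ / F y) *
      ((if j = k then 1 else 0)
        + ((⟪b, y⟫)^2 * ‖y‖ / ((Δ y)^2 * (Δ y + ‖b‖^2 * ‖y‖))) * lam j * lam k
        - (‖b‖^2 * ‖y‖ / (Δ y + ‖b‖^2 * ‖y‖)) * Pm b j k)) :
    ∀ j k, (∑ m, G j m * ((1/2 : ℝ) * pd (pd (fun z => (F z)^2) m) k y)) =
      (if j = k then 1 else 0) := by
  have hs : ‖b‖ ^ 2 ≠ 0 := by positivity
  have hproj : ∀ z : EuclideanSpace ℝ (Fin n), ‖b‖ * ‖z - (⟪b, z⟫ / ‖b‖^2) • b‖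
      = √(‖b‖ ^ 2 * ‖z‖ ^ 2 - ⟪b, z⟫ ^ 2) := by
    intro z
    have h1 : ‖b‖ ^ 2 * ‖z‖ ^ 2 - ⟪b, z⟫ ^ 2 = (‖b‖ * ‖z - (⟪b, z⟫ / ‖b‖^2) • b‖) ^ 2 := by
      rw [mul_pow, norm_sub_sq_real, inner_smul_right, real_inner_comm, norm_smul, mul_pow,
        Real.norm_eq_abs, sq_abs]
      field_simp
      ring
    rw [h1, Real.sqrt_sq (by positivity)]
  have hy' : 0 < ‖b‖ ^ 2 * ‖y‖ ^ 2 - ⟪b, y⟫ ^ 2 := by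
    rw [← Real.sqrt_pos, ← hproj]
    refine mul_pos hb0 (norm_pos_iff.2 fun h0 => hy ?_)
    rw [sub_eq_zero.1 h0]
    exact Submodule.smul_mem _ _ (Submodule.mem_span_singleton_self b)
  obtain ⟨ε, hε, hΔε⟩ : ∃ ε : ℝ, ε ^ 2 = 1 ∧
      ∀ z, Δ z = ε * √(‖b‖ ^ 2 * ‖z‖ ^ 2 - ⟪b, z⟫ ^ 2) := by
    rcases hΔ with h | h
    · exact ⟨1, by norm_num, fun z => by rw [h, hproj]; ring⟩
    · exact ⟨-1, by norm_num, fun z => by rw [h, hproj]; ring⟩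
  have hy0 : y ≠ 0 := by rintro rfl; exact hy (Submodule.zero_mem _)
  have hr : ‖y‖ ≠ 0 := norm_ne_zero_iff.2 hy0
  have hDsq : Δ y ^ 2 = ‖b‖ ^ 2 * ‖y‖ ^ 2 - ⟪b, y⟫ ^ 2 := by
    rw [hΔε, mul_pow, hε, Real.sq_sqrt hy'.le, one_mul]
  have hD : Δ y ≠ 0 := by
    intro h0; rw [h0] at hDsq; norm_num at hDsq; linarith
  rw [hF] at hF0
  intro j k
  have hρ : ∀ j, pd (fun z : EuclideanSpace ℝ (Fin n) => ‖z‖) j y = y j / ‖y‖ := by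
    intro j
    rw [pd, (hasFDerivAt_norm_of_ne_zero hy0).fderiv]
    simp [EuclideanSpace.inner_single_right]
    field_simp
  simp only [hessian_formula b ε Δ F hε hΔε hF y hy']
  have key := scalar_identity (‖b‖ ^ 2) ‖y‖ (Δ y) ⟪b, y⟫ (y j) (y k) (b j) (b k)
    (if j = k then 1 else 0) hs hr hD hF0 hD0 hDsq _ _ _ _ _ _ _ _ _ _ rfl rfl rfl rfl rfl rfl
    rfl rfl rfl rfl
  rw [← key, ← sum_mul_rank_two]
  refine Finset.sum_congr rfl fun m _ => ?_
  congr 1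
  rw [hG, hlam, hlam, hρ, hρ, hF, Pm]
  field_simp
  ring
end

section
/- Let F = ρ + Δ be a b-space Finsler norm on ℝ^n and let y ∈ ℝ^n ∖ ℝb be a point at which the matrix (g_{jk}(y)) is invertible and Δ(y) + ‖b‖² ρ(y) ≠ 0. Then κ := n + 1 − (F²/Δ) g^{kl} Δ_{kl} takes the value κ_b = n + 1 − (n − 2) F (F − Δ) ‖b‖² / ( Δ (Δ + (F − Δ) ‖b‖²) ); equivalently, g^{kl} Δ_{kl} = (n − 2)(F − Δ)‖b‖² / ( F (Δ + (F − Δ)‖b‖²) ) (repeated indices summed). -/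
/-!
Write `w = Py`, `r = ‖w‖` and `Δ = c‖P ·‖` with `c = ±‖b‖`. The Hessian of `Δ` at `y` is `(c / r) Q`,
where `Q = 1 - bbᵀ/‖b‖² - wwᵀ/r²` is the orthogonal projection onto the complement of
`span {b, w} = span {b, y}`, so that `tr Q = n - 2`. In `g = ∇F ∇Fᵀ + F (Hess ρ + Hess Δ)` the
gradient of `F` lies in `span {b, y}` and is killed by `Q`, while `Hess ρ = (1 - yyᵀ/ρ²)/ρ` acts on
the range of `Q` as `1/ρ`. Hence `g Q = F (1/ρ + c/r) Q`, and
`tr (g⁻¹ Q) = (n - 2) / (F (1/ρ + c/r))`, which is the claim because `c² = ‖b‖²`.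

The derivatives of `ρ` and `‖P ·‖` both come from the formulas for `z ↦ ‖L z‖` with `L` continuous
linear, `pd_norm_comp` and `pd_pd_norm_comp`; the linear algebra is `trace_inv_mul_proj`.
-/

open scoped RealInnerProductSpace

section Derivatives

variable {n : ℕ}

lemma hasFDerivAt_norm_comp (L : EuclideanSpace ℝ (Fin n) →L[ℝ] EuclideanSpace ℝ (Fin n))
    {z : EuclideanSpace ℝ (Fin n)} (hz : L z ≠ 0) :
    HasFDerivAt (fun x => ‖L x‖) (‖L z‖⁻¹ • (innerSL ℝ (L z)).comp L) z := by
  have hne : ‖L z‖ ≠ 0 := norm_ne_zero_iff.mpr hz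
  -- Differentiate `‖L x‖` as `√(‖L x‖²)`, smooth away from the kernel of `L`.
  have h1 : HasFDerivAt (fun x => ‖L x‖ ^ 2) (2 • (innerSL ℝ (L z)).comp L) z :=
    L.hasFDerivAt.norm_sq
  have h2 := h1.sqrt (pow_ne_zero 2 hne)
  simp only [Real.sqrt_sq (norm_nonneg _)] at h2
  refine h2.congr_fderiv ?_
  ext v
  simp
  field_simp

lemma pd_norm_comp (L : EuclideanSpace ℝ (Fin n) →L[ℝ] EuclideanSpace ℝ (Fin n))
    {z : EuclideanSpace ℝ (Fin n)} (hz : L z ≠ 0) (k : Fin n) :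
    pd (fun x => ‖L x‖) k z = ‖L z‖⁻¹ * ⟪L z, L (EuclideanSpace.single k 1)⟫ := by
  simp [pd, (hasFDerivAt_norm_comp L hz).fderiv]

lemma eventually_map_ne_zero (L : EuclideanSpace ℝ (Fin n) →L[ℝ] EuclideanSpace ℝ (Fin n))
    {z : EuclideanSpace ℝ (Fin n)} (hz : L z ≠ 0) : ∀ᶠ x in nhds z, L x ≠ 0 :=
  L.continuous.continuousAt.eventually_ne hz

lemma hasFDerivAt_pd_norm_comp (L : EuclideanSpace ℝ (Fin n) →L[ℝ] EuclideanSpace ℝ (Fin n))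
    {z : EuclideanSpace ℝ (Fin n)} (hz : L z ≠ 0) (k : Fin n) :
    HasFDerivAt (pd (fun x => ‖L x‖) k)
      (‖L z‖⁻¹ • (innerSL ℝ (L (EuclideanSpace.single k 1))).comp L
        - (⟪L z, L (EuclideanSpace.single k 1)⟫ / ‖L z‖ ^ 3) • (innerSL ℝ (L z)).comp L) z := by
  have hne : ‖L z‖ ≠ 0 := norm_ne_zero_iff.mpr hz
  have h1 := (hasDerivAt_inv hne).comp_hasFDerivAt z (hasFDerivAt_norm_comp L hz)
  have h2 : HasFDerivAt (fun x => ⟪L (EuclideanSpace.single k 1), L x⟫)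
      ((innerSL ℝ (L (EuclideanSpace.single k 1))).comp L) z :=
    ((innerSL ℝ (L (EuclideanSpace.single k 1))).comp L).hasFDerivAt
  have h3 := h1.mul h2
  refine (h3.congr_fderiv ?_).congr_of_eventuallyEq ?_
  · ext v
    simp [real_inner_comm]
    field_simp
    ring
  · filter_upwards [eventually_map_ne_zero L hz] with x hx
    rw [pd_norm_comp L hx, real_inner_comm]
    rfl

lemma pd_pd_norm_comp (L : EuclideanSpace ℝ (Fin n) →L[ℝ] EuclideanSpace ℝ (Fin n))
    {z : EuclideanSpace ℝ (Fin n)} (hz : L z ≠ 0) (k l : Fin n) :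
    pd (pd (fun x => ‖L x‖) k) l z =
      ‖L z‖⁻¹ * ⟪L (EuclideanSpace.single k 1), L (EuclideanSpace.single l 1)⟫
        - ⟪L z, L (EuclideanSpace.single k 1)⟫ / ‖L z‖ ^ 3
          * ⟪L z, L (EuclideanSpace.single l 1)⟫ := by
  rw [pd, (hasFDerivAt_pd_norm_comp L hz k).fderiv]
  simp

/-- Here `F = ‖·‖ + c‖L ·‖`; the formula is `½ (F²)_{jk} = F_j F_k + F (ρ_{jk} + c‖L ·‖_{jk})`. -/
lemma half_pd_pd_sq (L : EuclideanSpace ℝ (Fin n) →L[ℝ] EuclideanSpace ℝ (Fin n)) (c : ℝ)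
    {z : EuclideanSpace ℝ (Fin n)} (hz0 : z ≠ 0) (hz : L z ≠ 0) (j k : Fin n) :
    (1 / 2 : ℝ) * pd (pd (fun x => (‖x‖ + c * ‖L x‖) ^ 2) j) k z =
      (pd (fun x => ‖x‖) j z + c * pd (fun x => ‖L x‖) j z)
          * (pd (fun x => ‖x‖) k z + c * pd (fun x => ‖L x‖) k z)
        + (‖z‖ + c * ‖L z‖)
          * (pd (pd (fun x => ‖x‖) j) k z + c * pd (pd (fun x => ‖L x‖) j) k z) := by
  have key : ∀ x : EuclideanSpace ℝ (Fin n), x ≠ 0 → L x ≠ 0 →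
      HasFDerivAt (fun x => ‖x‖ + c * ‖L x‖)
        (fderiv ℝ (fun x => ‖x‖) x + c • fderiv ℝ (fun x => ‖L x‖) x) x := by
    intro x hx0 hx
    have h1 := (hasFDerivAt_norm_comp (ContinuousLinearMap.id ℝ _) (z := x) hx0)
    have h2 := hasFDerivAt_norm_comp L hx
    exact h1.differentiableAt.hasFDerivAt.add (h2.differentiableAt.hasFDerivAt.const_mul c)
  have hpd : pd (fun x => (‖x‖ + c * ‖L x‖) ^ 2) j =ᶠ[nhds z] fun x =>
      2 * ((‖x‖ + c * ‖L x‖) * (pd (fun x => ‖x‖) j x + c * pd (fun x => ‖L x‖) j x)) := by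
    filter_upwards [eventually_map_ne_zero L hz, eventually_ne_nhds hz0] with x hx hx0
    rw [pd, ((key x hx0 hx).pow 2).fderiv]
    simp [pd]
    ring
  have d1 := (hasFDerivAt_pd_norm_comp (ContinuousLinearMap.id ℝ _) (z := z) hz0
    j).differentiableAt.hasFDerivAt
  have d2 := (hasFDerivAt_pd_norm_comp L hz j).differentiableAt.hasFDerivAt
  have d := (((key z hz0 hz).mul (d1.add (d2.const_mul c))).const_mul 2)
  have e := (d.congr_of_eventuallyEq hpd).fderiv
  rw [pd, e]
  simp [pd]
  ring

end Derivatives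

/-- The symmetric matrix `Q = 1 - s bbᵀ - t wwᵀ`; for `s = ‖b‖⁻²`, `t = ‖w‖⁻²` and `b ⟂ w` it is the
orthogonal projection onto the complement of `span {b, w}`. -/
def projMatrix {n : ℕ} (b w : Fin n → ℝ) (s t : ℝ) : Matrix (Fin n) (Fin n) ℝ :=
  1 - s • Matrix.vecMulVec b b - t • Matrix.vecMulVec w w

lemma projMatrix_symm {n : ℕ} (b w : Fin n → ℝ) (s t : ℝ) (k l : Fin n) :
    projMatrix b w s t k l = projMatrix b w s t l k := by
  simp only [projMatrix, Matrix.sub_apply, Matrix.smul_apply, Matrix.vecMulVec_apply,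
    Matrix.one_apply, smul_eq_mul, @eq_comm _ k l, mul_comm (b k), mul_comm (w k)]

/-- A matrix `g = ffᵀ + C - E yyᵀ + D Q`, with scalar `C` and with `f, y ∈ span {b, w}`, acts as the
scalar `C + D` on the range of `Q`, so `tr (g⁻¹ Q) = (n - 2) / (C + D)`. -/
lemma trace_inv_mul_proj {n : ℕ} (b w f y : Fin n → ℝ) (s t C D E : ℝ)
    (hb : s * (b ⬝ᵥ b) = 1) (hw : t * (w ⬝ᵥ w) = 1) (hbw : b ⬝ᵥ w = 0)
    {f₁ f₂ y₁ y₂ : ℝ} (hf : f = f₁ • b + f₂ • w) (hyy : y = y₁ • b + y₂ • w)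
    (g : Matrix (Fin n) (Fin n) ℝ) (hdet : IsUnit g.det)
    (hg : g = Matrix.vecMulVec f f + C • (1 : Matrix (Fin n) (Fin n) ℝ)
      - E • Matrix.vecMulVec y y + D • projMatrix b w s t)
    (hCD : C + D ≠ 0) :
    (g⁻¹ * projMatrix b w s t).trace = ((n : ℝ) - 2) / (C + D) := by
  have hwb : w ⬝ᵥ b = 0 := by rw [dotProduct_comm, hbw]
  set Q := projMatrix b w s t with hQ
  have qb : Matrix.vecMul b Q = 0 := by
    simp only [hQ, projMatrix, Matrix.vecMul_sub, Matrix.vecMul_one, Matrix.vecMul_smul,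
      Matrix.vecMul_vecMulVec, hbw, smul_smul, hb]
    simp
  have qw : Matrix.vecMul w Q = 0 := by
    simp only [hQ, projMatrix, Matrix.vecMul_sub, Matrix.vecMul_one, Matrix.vecMul_smul,
      Matrix.vecMul_vecMulVec, hwb, smul_smul, hw]
    simp
  have qf : Matrix.vecMul f Q = 0 := by
    rw [hf, Matrix.add_vecMul, Matrix.smul_vecMul, Matrix.smul_vecMul, qb, qw]; simp
  have qy : Matrix.vecMul y Q = 0 := by
    rw [hyy, Matrix.add_vecMul, Matrix.smul_vecMul, Matrix.smul_vecMul, qb, qw]; simp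
  have qq : Q * Q = Q := by
    conv_lhs => enter [1]; rw [hQ, projMatrix]
    simp only [Matrix.sub_mul, Matrix.smul_mul, Matrix.vecMulVec_mul, qb, qw]
    simp
  have gq : g * Q = (C + D) • Q := by
    rw [hg]
    simp only [Matrix.sub_mul, Matrix.add_mul, Matrix.smul_mul, Matrix.vecMulVec_mul, qf, qy, qq]
    simp [add_smul]
  have iq : g⁻¹ * Q = (C + D)⁻¹ • Q := by
    have h : g⁻¹ * (g * Q) = Q := Matrix.nonsing_inv_mul_cancel_left g Q hdet
    rw [gq, Matrix.mul_smul] at h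
    rw [← h, smul_smul, inv_mul_cancel₀ hCD, one_smul, h]
  have tq : Q.trace = (n : ℝ) - 2 := by
    rw [hQ, projMatrix]
    simp only [Matrix.trace_sub, Matrix.trace_smul, Matrix.trace_vecMulVec, Matrix.trace_one,
      smul_eq_mul, hb, hw, Fintype.card_fin]
    ring
  rw [iq, Matrix.trace_smul, tq, smul_eq_mul]
  field_simp

/-- The orthogonal projection `z ↦ z - (⟪b, z⟫ / ‖b‖²) b` onto the complement of `ℝb`. -/
noncomputable def perp {n : ℕ} (b : EuclideanSpace ℝ (Fin n)) :
    EuclideanSpace ℝ (Fin n) →L[ℝ] EuclideanSpace ℝ (Fin n) :=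
  ContinuousLinearMap.id ℝ _ - ((‖b‖ ^ 2)⁻¹ • innerSL ℝ b).smulRight b

lemma perp_apply {n : ℕ} (b z : EuclideanSpace ℝ (Fin n)) :
    perp b z = z - (⟪b, z⟫ / ‖b‖ ^ 2) • b := by
  simp [perp, div_eq_inv_mul]

lemma inner_perp_perp {n : ℕ} {b : EuclideanSpace ℝ (Fin n)} (hb : 0 < ‖b‖)
    (x z : EuclideanSpace ℝ (Fin n)) :
    ⟪perp b x, perp b z⟫ = ⟪x, z⟫ - ⟪b, x⟫ * ⟪b, z⟫ / ‖b‖ ^ 2 := by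
  simp only [perp_apply, inner_sub_left, inner_sub_right, inner_smul_left, inner_smul_right,
    real_inner_self_eq_norm_sq, real_inner_comm b x, RCLike.conj_to_real]
  rw [real_inner_comm x b]
  field_simp
  ring

/-- For a b-space Finsler norm `F = ρ + Δ` on ℝⁿ at `y ∉ ℝb` where
`(g_{jk}(y))` is invertible and `Δ + ‖b‖²ρ ≠ 0`, the quantity
`κ = n + 1 - (F²/Δ) g^{kl} Δ_{kl}` takes the value
`κ_b = n + 1 - (n-2) F (F-Δ) ‖b‖² / (Δ (Δ + (F-Δ)‖b‖²))`; equivalently,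
`g^{kl} Δ_{kl} = (n-2)(F-Δ)‖b‖² / (F (Δ + (F-Δ)‖b‖²))`. -/
theorem stmt16 {n : ℕ} (hn : 2 ≤ n)
    (b : EuclideanSpace ℝ (Fin n)) (hb0 : 0 < ‖b‖) (hb1 : ‖b‖ < 1)
    (Δ : EuclideanSpace ℝ (Fin n) → ℝ)
    (hΔ : (∀ z, Δ z = ‖b‖ * ‖z - (⟪b, z⟫ / ‖b‖^2) • b‖) ∨
          (∀ z, Δ z = -(‖b‖ * ‖z - (⟪b, z⟫ / ‖b‖^2) • b‖)))
    (F : EuclideanSpace ℝ (Fin n) → ℝ)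
    (hF : ∀ z, F z = ‖z‖ + Δ z)
    (y : EuclideanSpace ℝ (Fin n))
    (hy : y ∉ Submodule.span ℝ ({b} : Set (EuclideanSpace ℝ (Fin n))))
    (g : Matrix (Fin n) (Fin n) ℝ)
    (hg : ∀ j k, g j k = (1/2 : ℝ) * pd (pd (fun z => (F z)^2) j) k y)
    (hginv : IsUnit g.det)
    (hD0 : Δ y + ‖b‖^2 * ‖y‖ ≠ 0) :
    ((n : ℝ) + 1 - ((F y)^2 / Δ y) * ∑ k, ∑ l, g⁻¹ k l * pd (pd Δ k) l y
        = (n : ℝ) + 1 - ((n : ℝ) - 2) * F y * (F y - Δ y) * ‖b‖^2 /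
            (Δ y * (Δ y + (F y - Δ y) * ‖b‖^2))) ∧
    (∑ k, ∑ l, g⁻¹ k l * pd (pd Δ k) l y
        = ((n : ℝ) - 2) * (F y - Δ y) * ‖b‖^2 /
            (F y * (Δ y + (F y - Δ y) * ‖b‖^2))) := by
  obtain ⟨c, hc2, hc⟩ : ∃ c : ℝ, c ^ 2 = ‖b‖ ^ 2 ∧ ∀ z, Δ z = c * ‖perp b z‖ := by
    rcases hΔ with h | h
    · exact ⟨‖b‖, rfl, fun z => by rw [h, perp_apply]⟩
    · exact ⟨-‖b‖, by ring, fun z => by rw [h, perp_apply]; ring⟩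
  have hP : perp b y ≠ 0 := by
    rw [perp_apply]
    intro h
    exact hy (Submodule.mem_span_singleton.mpr ⟨_, (sub_eq_zero.mp h).symm⟩)
  have hy0 : y ≠ 0 := by
    rintro rfl
    exact hP (map_zero _)
  obtain rfl : Δ = fun z => c * ‖perp b z‖ := funext hc
  obtain rfl : F = fun z => ‖z‖ + c * ‖perp b z‖ := funext hF
  clear hc hF hΔ
  set w := perp b y with hw
  have hr : 0 < ‖w‖ := norm_pos_iff.mpr hP
  have hρ : 0 < ‖y‖ := norm_pos_iff.mpr hy0
  have hc0 : c ≠ 0 := by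
    rintro rfl
    have : 0 < ‖b‖ ^ 2 := by positivity
    linarith
  have hrρ : ‖w‖ ≤ ‖y‖ := by
    have h := inner_perp_perp hb0 y y
    rw [← hw, real_inner_self_eq_norm_sq, real_inner_self_eq_norm_sq] at h
    have h' : 0 ≤ ⟪b, y⟫ * ⟪b, y⟫ / ‖b‖ ^ 2 := by
      have := mul_self_nonneg ⟪b, y⟫
      positivity
    nlinarith
  -- `|c| = ‖b‖ < 1` and `‖Py‖ ≤ ‖y‖`, so `F y > 0` for either sign of `Δ`.
  have hFpos : 0 < ‖y‖ + c * ‖w‖ := by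
    have h1 : |c| < 1 := by rwa [(sq_eq_sq_iff_abs_eq_abs _ _).mp hc2, abs_norm]
    have h2 := (abs_lt.mp h1).1
    nlinarith
  have hbw : ⟪b, w⟫ = 0 := by
    rw [hw, perp_apply, inner_sub_right, inner_smul_right, real_inner_self_eq_norm_sq]
    field_simp
    ring
  -- Since `w ⟂ b`, the gradient of `‖P ·‖` at `y` is `w / ‖w‖`.
  have hwP : ∀ x, ⟪w, perp b x⟫ = ⟪w, x⟫ := fun x => by
    rw [perp_apply, inner_sub_right, inner_smul_right, real_inner_comm b w, hbw]; ring
  have dot : ∀ u v : EuclideanSpace ℝ (Fin n), u.ofLp ⬝ᵥ v.ofLp = ⟪u, v⟫ := fun u v => by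
    rw [EuclideanSpace.inner_eq_star_dotProduct, dotProduct_comm]; rfl
  set Q := projMatrix b.ofLp w.ofLp (‖b‖ ^ 2)⁻¹ (‖w‖ ^ 2)⁻¹ with hQ
  have Pkl : ∀ k l, pd (pd (fun z => ‖perp b z‖) k) l y = ‖w‖⁻¹ * Q k l := fun k l => by
    rw [pd_pd_norm_comp (perp b) hP, ← hw, hwP, hwP, inner_perp_perp hb0, hQ, projMatrix]
    simp [Matrix.vecMulVec_apply, Matrix.one_apply, EuclideanSpace.inner_single_right,
      eq_comm]
    field_simp
  have Pk : ∀ k, pd (fun z => ‖perp b z‖) k y = ‖w‖⁻¹ * w k := fun k => by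
    rw [pd_norm_comp (perp b) hP, ← hw, hwP]
    simp [EuclideanSpace.inner_single_right]
  have Nkl : ∀ k l, pd (pd (fun z : EuclideanSpace ℝ (Fin n) => ‖z‖) k) l y =
      ‖y‖⁻¹ * (1 : Matrix (Fin n) (Fin n) ℝ) k l - y k * y l / ‖y‖ ^ 3 := fun k l => by
    have h := pd_pd_norm_comp (ContinuousLinearMap.id ℝ _) (z := y) hy0 k l
    simp only [ContinuousLinearMap.id_apply] at h
    rw [h]
    simp [Matrix.one_apply, EuclideanSpace.inner_single_right, eq_comm]
    field_simp
  have Nk : ∀ k, pd (fun z : EuclideanSpace ℝ (Fin n) => ‖z‖) k y = ‖y‖⁻¹ * y k := fun k => by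
    have h := pd_norm_comp (ContinuousLinearMap.id ℝ _) (z := y) hy0 k
    simp only [ContinuousLinearMap.id_apply] at h
    rw [h]
    simp [EuclideanSpace.inner_single_right]
  have Dkl : ∀ k l, pd (pd (fun z => c * ‖perp b z‖) k) l y = c * ‖w‖⁻¹ * Q l k := fun k l => by
    have h1 : pd (fun z => c * ‖perp b z‖) k =
        fun z => c * pd (fun z => ‖perp b z‖) k z := by
      funext z
      simp only [pd]
      rw [show (fun z => c * ‖perp b z‖) = c • (fun z => ‖perp b z‖) from rfl,
        fderiv_const_smul_field]
      rfl
    have h2 : pd (fun z => c * pd (fun z => ‖perp b z‖) k z) l y =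
        c * pd (pd (fun z => ‖perp b z‖) k) l y := by
      rw [pd, show (fun z => c * pd (fun z => ‖perp b z‖) k z) =
        c • pd (fun z => ‖perp b z‖) k from rfl, fderiv_const_smul_field]
      rfl
    rw [h1, h2, Pkl, hQ, projMatrix_symm, mul_assoc]
  set Fy := ‖y‖ + c * ‖w‖ with hFy
  have hDr : c * ‖w‖ + ‖b‖ ^ 2 * ‖y‖ = c * (‖w‖ + c * ‖y‖) := by rw [← hc2]; ring
  have hne : ‖w‖ + c * ‖y‖ ≠ 0 := by
    intro h
    apply hD0
    show c * ‖w‖ + ‖b‖ ^ 2 * ‖y‖ = 0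
    rw [hDr, h, mul_zero]
  have hsum : Fy * ‖y‖⁻¹ + Fy * (c * ‖w‖⁻¹) = Fy * (‖w‖ + c * ‖y‖) / (‖y‖ * ‖w‖) := by
    field_simp
  have hyw : y.ofLp = (⟪b, y⟫ / ‖b‖ ^ 2) • b.ofLp + (1 : ℝ) • w.ofLp := by
    rw [hw, perp_apply]; simp
  -- `Hess ρ` contributes the scalar `F/ρ` and the `yyᵀ` term, `Hess Δ` the multiple `F c/r` of `Q`.
  have tr := trace_inv_mul_proj b.ofLp w.ofLp (‖y‖⁻¹ • y.ofLp + (c * ‖w‖⁻¹) • w.ofLp) y.ofLp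
    (‖b‖ ^ 2)⁻¹ (‖w‖ ^ 2)⁻¹ (Fy * ‖y‖⁻¹) (Fy * (c * ‖w‖⁻¹)) (Fy / ‖y‖ ^ 3)
    (by rw [dot, real_inner_self_eq_norm_sq]; field_simp)
    (by rw [dot, real_inner_self_eq_norm_sq]; field_simp)
    (by rw [dot, hbw])
    (f₁ := ‖y‖⁻¹ * (⟪b, y⟫ / ‖b‖ ^ 2)) (f₂ := ‖y‖⁻¹ + c * ‖w‖⁻¹)
    (by rw [hyw]; module) hyw g hginv
    (by
      ext j k
      rw [hg, half_pd_pd_sq (perp b) c hy0 hP, Nk, Nk, Pk, Pk, Nkl, Pkl, ← hw, ← hFy, ← hQ]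
      simp [Matrix.vecMulVec_apply]
      ring)
    (by
      rw [hsum]
      positivity)
  have S : ∑ k, ∑ l, g⁻¹ k l * pd (pd (fun z => c * ‖perp b z‖) k) l y =
      c * ‖w‖⁻¹ * (g⁻¹ * Q).trace := by
    simp only [Dkl, Matrix.trace, Matrix.diag, Matrix.mul_apply, Finset.mul_sum]
    refine Finset.sum_congr rfl fun k _ => Finset.sum_congr rfl fun l _ => ?_
    ring
  rw [S, hQ, tr, hsum]
  have e1 : c * ‖w‖ + (Fy - c * ‖w‖) * ‖b‖ ^ 2 = c * (‖w‖ + c * ‖y‖) := by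
    rw [← hDr, hFy]; ring
  have e2 : Fy - c * ‖w‖ = ‖y‖ := by rw [hFy]; ring
  have hF0 := hFpos.ne'
  show (n : ℝ) + 1 - Fy ^ 2 / (c * ‖w‖) * _ = _ - _ * Fy * (Fy - c * ‖w‖) * _ /
    (c * ‖w‖ * (c * ‖w‖ + (Fy - c * ‖w‖) * ‖b‖ ^ 2)) ∧
    _ = _ * (Fy - c * ‖w‖) * _ / (Fy * (c * ‖w‖ + (Fy - c * ‖w‖) * ‖b‖ ^ 2))
  rw [e1, e2, ← hc2]
  constructor <;> field_simp
end
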